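/- arXiv:2403.09335 — 10 statements merged into one kernel-verified Lean document; each statement's English description precedes it below -/
import Mathlib

section
/- Let N ≥ 1 and m ≥ 1 be integers and let f : ℝ → ℝ be m times continuously differentiable on [0,N]. Then the backward Euler–Maclaurin formula holds: Σ_{k=0}^{N−1} f(k) = ∫_0^N f(s) ds + Σ_{l=1}^{m} ((bernoulli l)/l!)·(f^{(l−1)}(N) − f^{(l−1)}(0)) + R_m, where the remainder is R_m = ((−1)^{m+1}/m!)·∫_0^N f^{(m)}(s)·P_m(s − ⌊s⌋) ds. -/
open scoped Nat
open MeasureTheory intervalIntegral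

/-- The `l`-th Bernoulli polynomial `P_l(x) = ∑_{j=0}^l C(l,j) · B_j · x^{l-j}`,
with `bernoulli 1 = -1/2`. -/
noncomputable def bernoulliPoly (l : ℕ) (x : ℝ) : ℝ :=
  ∑ j ∈ Finset.range (l + 1), (l.choose j : ℝ) * ((bernoulli j : ℚ) : ℝ) * x ^ (l - j)

theorem bernoulliPoly_eq_bernoulliFun (l : ℕ) : bernoulliPoly l = bernoulliFun l := by
  ext x
  simp only [bernoulliPoly, bernoulliFun, Polynomial.bernoulli, Polynomial.map_sum,
    Polynomial.map_monomial, Polynomial.eval_finsetSum, Polynomial.eval_monomial]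
  refine Finset.sum_congr rfl fun j _ => ?_
  simp only [map_mul, map_natCast, eq_ratCast]
  ring

/-- On `[0, N]`, the integral of a continuous function against a continuous function of the
fractional part splits into integrals over unit intervals. -/
theorem integral_mul_comp_fract_eq_sum {N : ℕ} {g P : ℝ → ℝ}
    (hg : ContinuousOn g (Set.Icc 0 (N : ℝ))) (hP : Continuous P) :
    ∫ s in (0:ℝ)..N, g s * P (s - ⌊s⌋) =
      ∑ k ∈ Finset.range N, ∫ s in (k:ℝ)..((k + 1 : ℕ) : ℝ), g s * P (s - k) := by
  have hEq (k : ℕ) : Set.EqOn (fun s => g s * P (s - k)) (fun s => g s * P (s - ⌊s⌋))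
      (Set.uIoo (k : ℝ) ((k + 1 : ℕ) : ℝ)) := by
    intro s hs
    rw [Set.uIoo_of_le (by simp)] at hs
    have hfloor : ⌊s⌋ = (k : ℤ) := by
      rw [Int.floor_eq_iff]
      exact ⟨by simpa using hs.1.le, by simpa using hs.2⟩
    simp [hfloor]
  have hint (k : ℕ) (hk : k < N) :
      IntervalIntegrable (fun s => g s * P (s - ⌊s⌋)) volume (k : ℝ) ((k + 1 : ℕ) : ℝ) := by
    refine IntervalIntegrable.congr_uIoo (ContinuousOn.intervalIntegrable ?_) (hEq k)
    refine (hg.mono ?_).mul (by fun_prop)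
    rw [Set.uIcc_of_le (by simp)]
    exact Set.Icc_subset_Icc (Nat.cast_nonneg k) (by exact_mod_cast hk)
  have hsum := sum_integral_adjacent_intervals (a := fun k : ℕ => (k : ℝ)) hint
  rw [Nat.cast_zero] at hsum
  rw [← hsum]
  exact Finset.sum_congr rfl fun k _ => (integral_congr_uIoo (hEq k)).symm

/-- Integration by parts against a periodized Bernoulli polynomial. -/
theorem integral_deriv_mul_bernoulliFun_fract {N : ℕ} (j : ℕ) {g g' : ℝ → ℝ}
    (hg : ∀ x ∈ Set.Icc 0 (N : ℝ), HasDerivWithinAt g (g' x) (Set.Icc 0 (N : ℝ)) x)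
    (hg' : ContinuousOn g' (Set.Icc 0 (N : ℝ))) :
    ∫ s in (0:ℝ)..N, g' s * bernoulliFun (j + 1) (s - ⌊s⌋) =
      ∑ k ∈ Finset.range N, (g ((k + 1 : ℕ) : ℝ) * bernoulliFun (j + 1) 1
          - g k * bernoulliFun (j + 1) 0)
        - (j + 1) * ∫ s in (0:ℝ)..N, g s * bernoulliFun j (s - ⌊s⌋) := by
  have hgc : ContinuousOn g (Set.Icc 0 (N : ℝ)) := fun x hx => (hg x hx).continuousWithinAt
  rw [integral_mul_comp_fract_eq_sum hg' (continuous_bernoulliFun _),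
    integral_mul_comp_fract_eq_sum hgc (continuous_bernoulliFun _), Finset.mul_sum,
    ← Finset.sum_sub_distrib]
  refine Finset.sum_congr rfl fun k hk => ?_
  have hsub : Set.uIcc (k : ℝ) ((k + 1 : ℕ) : ℝ) ⊆ Set.Icc 0 (N : ℝ) := by
    rw [Set.uIcc_of_le (by simp)]
    exact Set.Icc_subset_Icc (Nat.cast_nonneg k) (by exact_mod_cast Finset.mem_range.mp hk)
  have hB (x : ℝ) : HasDerivAt (fun s : ℝ => bernoulliFun (j + 1) (s - k))
      ((j + 1) * bernoulliFun j (x - k)) x := by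
    simpa using (hasDerivAt_bernoulliFun (j + 1) (x - k)).comp_sub_const x (k : ℝ)
  have hparts := integral_mul_deriv_eq_deriv_mul_of_hasDerivWithinAt
    (fun x hx => (hg x (hsub hx)).mono hsub) (fun x _ => (hB x).hasDerivWithinAt)
    (hg'.mono hsub).intervalIntegrable
    (Continuous.intervalIntegrable (by fun_prop) (k : ℝ) ((k + 1 : ℕ) : ℝ))
  have hcomm (s : ℝ) : g s * ((j + 1) * bernoulliFun j (s - k)) =
      (j + 1) * (g s * bernoulliFun j (s - k)) := by ring
  simp only [hcomm, intervalIntegral.integral_const_mul, sub_self] at hparts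
  rw [hparts]
  push_cast
  rw [add_sub_cancel_left]
  ring

theorem neg_one_pow_succ_mul_bernoulli_succ {n : ℕ} (hn : 1 ≤ n) :
    (-1 : ℝ) ^ (n + 1) * ((bernoulli (n + 1) : ℚ) : ℝ) = ((bernoulli (n + 1) : ℚ) : ℝ) := by
  rcases Nat.even_or_odd (n + 1) with h | h
  · rw [h.neg_one_pow, one_mul]
  · rw [bernoulli_eq_zero_of_odd h (by lia)]
    simp

theorem ContDiffOn.hasDerivWithinAt_iteratedDerivWithin {n : ℕ} {f : ℝ → ℝ} {s : Set ℝ}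
    (hf : ContDiffOn ℝ ((n + 1 : ℕ) : WithTop ℕ∞) f s) (hs : UniqueDiffOn ℝ s) {x : ℝ}
    (hx : x ∈ s) :
    HasDerivWithinAt (iteratedDerivWithin n f s) (iteratedDerivWithin (n + 1) f s x) s x := by
  rw [iteratedDerivWithin_succ]
  exact (hf.differentiableOn_iteratedDerivWithin
    (by exact_mod_cast n.lt_succ_self) hs x hx).hasDerivWithinAt

/-- Backward Euler–Maclaurin formula with explicit integral remainder. -/
theorem backward_euler_maclaurin (N m : ℕ) (hN : 1 ≤ N) (hm : 1 ≤ m) (f : ℝ → ℝ)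
    (hf : ContDiffOn ℝ m f (Set.Icc 0 (N : ℝ))) :
    ∑ k ∈ Finset.range N, f (k : ℝ) =
      (∫ s in (0:ℝ)..(N:ℝ), f s)
      + ∑ l ∈ Finset.Icc 1 m,
          (((bernoulli l : ℚ) : ℝ) / (l ! : ℝ)) *
            (iteratedDerivWithin (l - 1) f (Set.Icc 0 (N : ℝ)) (N : ℝ)
              - iteratedDerivWithin (l - 1) f (Set.Icc 0 (N : ℝ)) 0)
      + ((-1 : ℝ) ^ (m + 1) / (m ! : ℝ)) *
          ∫ s in (0:ℝ)..(N:ℝ),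
            iteratedDerivWithin m f (Set.Icc 0 (N : ℝ)) s * bernoulliPoly m (s - ⌊s⌋) := by
  have hs : UniqueDiffOn ℝ (Set.Icc 0 (N : ℝ)) := uniqueDiffOn_Icc (by exact_mod_cast hN)
  induction m, hm using Nat.le_induction with
  | base =>
    have hparts := integral_deriv_mul_bernoulliFun_fract 0
      (fun x hx => ContDiffOn.hasDerivWithinAt_iteratedDerivWithin (n := 0) hf hs hx)
      (hf.continuousOn_iteratedDerivWithin le_rfl hs)
    have hsum := Finset.sum_range_sub (fun k : ℕ => f k) N
    rw [Finset.sum_sub_distrib] at hsum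
    simp only [zero_add, iteratedDerivWithin_zero, bernoulliFun_zero, bernoulliFun_one,
      Finset.sum_sub_distrib, ← Finset.sum_mul, Nat.cast_zero, mul_one, one_mul] at hparts hsum
    simp only [bernoulliPoly_eq_bernoulliFun, bernoulliFun_one, Finset.Icc_self,
      Finset.sum_singleton, bernoulli_one, Nat.sub_self, iteratedDerivWithin_zero, hparts]
    push_cast at hsum ⊢
    norm_num
    linarith
  | succ n hn ih =>
    have hparts := integral_deriv_mul_bernoulliFun_fract n
      (fun x hx => hf.hasDerivWithinAt_iteratedDerivWithin hs hx)
      (hf.continuousOn_iteratedDerivWithin le_rfl hs)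
    have hsum := Finset.sum_range_sub
      (fun k : ℕ => iteratedDerivWithin n f (Set.Icc 0 (N : ℝ)) k) N
    rw [bernoulliFun_endpoints_eq_of_ne_one (by lia), bernoulliFun_eval_zero] at hparts
    simp only [← sub_mul, ← Finset.sum_mul] at hparts
    rw [hsum, Nat.cast_zero] at hparts
    rw [ih (hf.of_le (by exact_mod_cast n.le_succ)), Finset.sum_Icc_succ_top (by lia),
      Nat.add_sub_cancel]
    simp only [bernoulliPoly_eq_bernoulliFun]
    rw [hparts, Nat.factorial_succ]
    have hsign := neg_one_pow_succ_mul_bernoulli_succ hn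
    have hn0 : (n : ℝ) + 1 ≠ 0 := by positivity
    push_cast
    field_simp
    linear_combination (iteratedDerivWithin n f (Set.Icc 0 (N : ℝ)) N
      - iteratedDerivWithin n f (Set.Icc 0 (N : ℝ)) 0) * hsign
end

section
/- Let N ≥ 1 and m ≥ 1 be integers and let f : ℝ → ℝ be m times continuously differentiable on [0,N]. Then the forward Euler–Maclaurin formula holds: Σ_{k=1}^{N} f(k) = ∫_0^N f(s) ds + Σ_{l=1}^{m} ((bernoulli' l)/l!)·(f^{(l−1)}(N) − f^{(l−1)}(0)) + R_m, where the remainder is R_m = ((−1)^{m+1}/m!)·∫_0^N f^{(m)}(s)·P_m(s − ⌊s⌋) ds. -/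
open scoped Nat
open MeasureTheory intervalIntegral

theorem uIcc_natCast_subset_Icc {N k : ℕ} (hk : k < N) :
    Set.uIcc (k : ℝ) ((k + 1 : ℕ) : ℝ) ⊆ Set.Icc 0 (N : ℝ) := by
  rw [Set.uIcc_of_le (by simp)]
  exact Set.Icc_subset_Icc (Nat.cast_nonneg k) (by exact_mod_cast hk)

theorem sub_floor_eq_of_mem_uIoo {k : ℕ} {s : ℝ}
    (hs : s ∈ Set.uIoo (k : ℝ) ((k + 1 : ℕ) : ℝ)) : s - ⌊s⌋ = s - k := by
  rw [Set.uIoo_of_le (by simp)] at hs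
  have h : ⌊s⌋ = (k : ℤ) := by
    rw [Int.floor_eq_iff]
    exact ⟨by simpa using hs.1.le, by simpa using hs.2⟩
  simp [h]

/-- The integral of `g` against a periodized continuous function, split at the integers. -/
theorem integral_mul_comp_sub_floor_eq_sum {N : ℕ} {g p : ℝ → ℝ}
    (hg : ContinuousOn g (Set.Icc 0 (N : ℝ))) (hp : Continuous p) :
    ∫ s in (0 : ℝ)..N, g s * p (s - ⌊s⌋) =
      ∑ k ∈ Finset.range N, ∫ s in (k : ℝ)..((k + 1 : ℕ) : ℝ), g s * p (s - k) := by
  have hcongr (k : ℕ) : Set.EqOn (fun s => g s * p (s - k)) (fun s => g s * p (s - ⌊s⌋))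
      (Set.uIoo (k : ℝ) ((k + 1 : ℕ) : ℝ)) := fun s hs => by
    simp only [sub_floor_eq_of_mem_uIoo hs]
  have hint (k : ℕ) (hk : k < N) :
      IntervalIntegrable (fun s => g s * p (s - ⌊s⌋)) volume (k : ℝ) ((k + 1 : ℕ) : ℝ) := by
    refine IntervalIntegrable.congr_uIoo (ContinuousOn.intervalIntegrable ?_) (hcongr k)
    exact (hg.mono (uIcc_natCast_subset_Icc hk)).mul (by fun_prop)
  have hsum := sum_integral_adjacent_intervals (a := fun k : ℕ => (k : ℝ)) hint
  simp only [Nat.cast_zero] at hsum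
  rw [← hsum]
  exact Finset.sum_congr rfl fun k _ => (integral_congr_uIoo (hcongr k)).symm

/-- Integration by parts against a Bernoulli polynomial on a unit interval. -/
theorem integral_deriv_mul_bernoulliFun_succ (l k : ℕ) {g g' : ℝ → ℝ}
    (hg : ContinuousOn g (Set.uIcc (k : ℝ) ((k + 1 : ℕ) : ℝ)))
    (hg' : ContinuousOn g' (Set.uIcc (k : ℝ) ((k + 1 : ℕ) : ℝ)))
    (hderiv : ∀ s ∈ Set.Ioo (k : ℝ) ((k + 1 : ℕ) : ℝ), HasDerivAt g (g' s) s) :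
    ∫ s in (k : ℝ)..((k + 1 : ℕ) : ℝ), g' s * bernoulliFun (l + 1) (s - k) =
      (bernoulli (l + 1) : ℝ) * (g ((k + 1 : ℕ) : ℝ) - g k)
        + (if l = 0 then g ((k + 1 : ℕ) : ℝ) else 0)
        - (l + 1) * ∫ s in (k : ℝ)..((k + 1 : ℕ) : ℝ), g s * bernoulliFun l (s - k) := by
  have hB (n : ℕ) : Continuous (fun s : ℝ => bernoulliFun n (s - k)) :=
    (continuous_bernoulliFun n).comp (by fun_prop)
  have hparts := integral_mul_deriv_eq_deriv_mul_of_hasDerivAt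
    (u := fun s => bernoulliFun (l + 1) (s - k))
    (u' := fun s => (l + 1) * bernoulliFun l (s - k)) (v := g) (v' := g')
    (a := (k : ℝ)) (b := ((k + 1 : ℕ) : ℝ)) (hB _).continuousOn hg
    (fun s _ => by
      simpa using (hasDerivAt_bernoulliFun (l + 1) (s - k)).comp_sub_const s (k : ℝ))
    (fun s hs => hderiv s (by simpa using hs))
    (((hB l).const_mul _).intervalIntegrable _ _) hg'.intervalIntegrable
  have hone : ((k + 1 : ℕ) : ℝ) - k = 1 := by simp
  rw [hone, sub_self, bernoulliFun_eval_one, bernoulliFun_eval_zero] at hparts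
  simp_rw [mul_comm (g' _), hparts, mul_assoc, intervalIntegral.integral_const_mul,
    mul_comm (g _)]
  by_cases hl : l = 0 <;> simp [hl] <;> ring

theorem hasDerivAt_iteratedDerivWithin_Icc {f : ℝ → ℝ} {a b s : ℝ} {m l : ℕ} (hl : l < m)
    (hf : ContDiffOn ℝ m f (Set.Icc a b)) (hs : s ∈ Set.Ioo a b) :
    HasDerivAt (iteratedDerivWithin l f (Set.Icc a b))
      (iteratedDerivWithin (l + 1) f (Set.Icc a b) s) s := by
  have hdiff := hf.differentiableOn_iteratedDerivWithin (m := l) (by exact_mod_cast hl)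
    (uniqueDiffOn_Icc (hs.1.trans hs.2)) s (Set.Ioo_subset_Icc_self hs)
  rw [iteratedDerivWithin_succ]
  exact hdiff.hasDerivWithinAt.hasDerivAt (Icc_mem_nhds hs.1 hs.2)

/-- The recursion satisfied by the remainder integrals of the Euler–Maclaurin formula. -/
theorem integral_iteratedDerivWithin_succ_mul_bernoulliPoly {N m l : ℕ} (hN : 1 ≤ N) (hl : l < m)
    {f : ℝ → ℝ} (hf : ContDiffOn ℝ m f (Set.Icc 0 (N : ℝ))) :
    ∫ s in (0 : ℝ)..N, iteratedDerivWithin (l + 1) f (Set.Icc 0 (N : ℝ)) s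
        * bernoulliPoly (l + 1) (s - ⌊s⌋) =
      (bernoulli (l + 1) : ℝ) * (iteratedDerivWithin l f (Set.Icc 0 (N : ℝ)) N
          - iteratedDerivWithin l f (Set.Icc 0 (N : ℝ)) 0)
        + (if l = 0 then ∑ k ∈ Finset.Icc 1 N, f k else 0)
        - (l + 1) * ∫ s in (0 : ℝ)..N, iteratedDerivWithin l f (Set.Icc 0 (N : ℝ)) s
            * bernoulliPoly l (s - ⌊s⌋) := by
  have hU : UniqueDiffOn ℝ (Set.Icc 0 (N : ℝ)) := uniqueDiffOn_Icc (by exact_mod_cast hN)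
  have hcont (n : ℕ) (hn : n ≤ m) :
      ContinuousOn (iteratedDerivWithin n f (Set.Icc 0 (N : ℝ))) (Set.Icc 0 (N : ℝ)) :=
    hf.continuousOn_iteratedDerivWithin (by exact_mod_cast hn) hU
  simp only [bernoulliPoly_eq_bernoulliFun]
  rw [integral_mul_comp_sub_floor_eq_sum (hcont _ hl) (continuous_bernoulliFun _),
    integral_mul_comp_sub_floor_eq_sum (hcont _ hl.le) (continuous_bernoulliFun _),
    Finset.sum_congr rfl fun k hk => integral_deriv_mul_bernoulliFun_succ l k
      ((hcont _ hl.le).mono (uIcc_natCast_subset_Icc (Finset.mem_range.1 hk)))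
      ((hcont _ hl).mono (uIcc_natCast_subset_Icc (Finset.mem_range.1 hk)))
      fun s hs => hasDerivAt_iteratedDerivWithin_Icc hl hf
        ⟨(Nat.cast_nonneg k).trans_lt hs.1,
          hs.2.trans_le (by exact_mod_cast Finset.mem_range.1 hk)⟩,
    Finset.sum_sub_distrib, Finset.sum_add_distrib, ← Finset.mul_sum, ← Finset.mul_sum,
    Finset.sum_range_sub fun k : ℕ => iteratedDerivWithin l f (Set.Icc 0 (N : ℝ)) k]
  have hsum : ∑ k ∈ Finset.range N, (if l = 0 then
      iteratedDerivWithin l f (Set.Icc 0 (N : ℝ)) ((k + 1 : ℕ) : ℝ) else 0) =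
      if l = 0 then ∑ k ∈ Finset.Icc 1 N, f k else 0 := by
    split_ifs with h
    · subst h
      simp only [iteratedDerivWithin_zero]
      rw [Finset.range_eq_Ico, Finset.sum_Ico_add' (fun k : ℕ => f k) 0 N 1]
      rfl
    · simp
  rw [hsum, Nat.cast_zero]

/-- Forward Euler–Maclaurin formula with explicit integral remainder. -/
theorem forward_euler_maclaurin (N m : ℕ) (hN : 1 ≤ N) (hm : 1 ≤ m) (f : ℝ → ℝ)
    (hf : ContDiffOn ℝ m f (Set.Icc 0 (N : ℝ))) :
    ∑ k ∈ Finset.Icc 1 N, f (k : ℝ) =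
      (∫ s in (0:ℝ)..(N:ℝ), f s)
      + ∑ l ∈ Finset.Icc 1 m,
          (((bernoulli' l : ℚ) : ℝ) / (l ! : ℝ)) *
            (iteratedDerivWithin (l - 1) f (Set.Icc 0 (N : ℝ)) (N : ℝ)
              - iteratedDerivWithin (l - 1) f (Set.Icc 0 (N : ℝ)) 0)
      + ((-1 : ℝ) ^ (m + 1) / (m ! : ℝ)) *
          ∫ s in (0:ℝ)..(N:ℝ),
            iteratedDerivWithin m f (Set.Icc 0 (N : ℝ)) s * bernoulliPoly m (s - ⌊s⌋) := by
  induction m, hm using Nat.le_induction with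
  | base =>
    have hrec := integral_iteratedDerivWithin_succ_mul_bernoulliPoly hN Nat.zero_lt_one hf
    simp [bernoulliPoly_eq_bernoulliFun] at hrec ⊢
    linarith
  | succ n hn ih =>
    have hrec := integral_iteratedDerivWithin_succ_mul_bernoulliPoly hN n.lt_succ_self hf
    rw [if_neg (by lia), add_zero] at hrec
    rw [ih (hf.of_le (by exact_mod_cast n.le_succ)), Finset.sum_Icc_succ_top (by lia), hrec,
      Nat.add_sub_cancel, bernoulli'_eq_bernoulli, Nat.factorial_succ]
    have hfac : (n ! : ℝ) ≠ 0 := by positivity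
    have hsucc : (n : ℝ) + 1 ≠ 0 := by positivity
    push_cast
    field_simp
    ring
end

section
/- Let X : ℝ → ℝ^d be continuously differentiable and s ≤ t. For every word (j_1,…,j_n) with n ≥ 1 and each j_k ∈ {1,…,d}, one has Σ_{k=0}^{n} (−1)^{n−k}·⟨S_{s,t}(X),(j_1,…,j_k)⟩·⟨S♭_{s,t}(X),(j_{k+1},…,j_n)⟩ = 0 (the k = 0 term uses the empty word, with value 1). Equivalently, the flip signature is the image of the group inverse of the signature under the involution Γ multiplying the degree-n component by (−1)^n. -/
open scoped Nat
open MeasureTheory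

/-- The open simplex `{(t_1,…,t_n) : s < t_1 < ⋯ < t_n < t}` in `ℝ^n`. -/
def simplexSet (n : ℕ) (s t : ℝ) : Set (Fin n → ℝ) :=
  {u | (∀ i, s < u i ∧ u i < t) ∧ ∀ i j : Fin n, i < j → u i < u j}

/-- Signature coefficient `⟨S_{s,t}(X), (w 0, …, w (n-1))⟩` of the path `X` over `[s,t]`,
for the word given by the first `n` letters of `w`; equal to `1` for the empty word. -/
noncomputable def sigCoeff {d : ℕ} (X : ℝ → Fin d → ℝ) (s t : ℝ) (n : ℕ) (w : ℕ → Fin d) : ℝ :=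
  if n = 0 then 1 else
    ∫ u in simplexSet n s t, ∏ k : Fin n, deriv (fun r => X r (w k)) (u k)

/-- Flip signature coefficient `⟨S♭_{s,t}(X), (w 0, …, w (n-1))⟩`:
the `k`-th letter is integrated against the time variable `t_{n+1-k}`. -/
noncomputable def flipCoeff {d : ℕ} (X : ℝ → Fin d → ℝ) (s t : ℝ) (n : ℕ) (w : ℕ → Fin d) : ℝ :=
  if n = 0 then 1 else
    ∫ u in simplexSet n s t, ∏ k : Fin n, deriv (fun r => X r (w k)) (u k.rev)

/-- The iterated integral `∫_{s<t_1<⋯<t_n<t} ∏ g_k(t_k)`, built one variable at a time starting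
from the innermost integral. -/
noncomputable def iteratedIntegral (s : ℝ) : (n : ℕ) → (Fin n → ℝ → ℝ) → ℝ → ℝ
  | 0, _, _ => 1
  | n + 1, g, t => ∫ r in s..t, g (Fin.last n) r * iteratedIntegral s n (fun k => g k.castSucc) r

theorem continuous_iteratedIntegral (s : ℝ) {n : ℕ} {g : Fin n → ℝ → ℝ}
    (hg : ∀ k, Continuous (g k)) : Continuous (iteratedIntegral s n g) := by
  induction n with
  | zero => exact continuous_const
  | succ n ih =>
    exact intervalIntegral.continuous_primitive (fun a b =>
      ((hg _).mul (ih fun k => hg k.castSucc)).intervalIntegrable a b) s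

theorem hasDerivAt_iteratedIntegral_succ (s : ℝ) {n : ℕ} {g : Fin (n + 1) → ℝ → ℝ}
    (hg : ∀ k, Continuous (g k)) (t : ℝ) :
    HasDerivAt (iteratedIntegral s (n + 1) g)
      (g (Fin.last n) t * iteratedIntegral s n (fun k => g k.castSucc) t) t :=
  ((hg _).mul (continuous_iteratedIntegral s fun k => hg k.castSucc)).integral_hasStrictDerivAt s t
    |>.hasDerivAt

theorem iteratedIntegral_succ_self (s : ℝ) (n : ℕ) (g : Fin (n + 1) → ℝ → ℝ) :
    iteratedIntegral s (n + 1) g s = 0 :=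
  intervalIntegral.integral_same

theorem measurableSet_simplexSet (n : ℕ) (s t : ℝ) : MeasurableSet (simplexSet n s t) := by
  unfold simplexSet
  measurability

theorem integrableOn_simplexSet (s t : ℝ) {n : ℕ} {F : (Fin n → ℝ) → ℝ} (hF : Continuous F) :
    IntegrableOn F (simplexSet n s t) :=
  (hF.continuousOn.integrableOn_compact
    (isCompact_univ_pi fun _ : Fin n => isCompact_Icc (a := s) (b := t))).mono_set
    fun _ hu i _ => ⟨(hu.1 i).1.le, (hu.1 i).2.le⟩

theorem snoc_mem_simplexSet_iff {n : ℕ} {s t r : ℝ} {v : Fin n → ℝ} :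
    (Fin.snoc v r : Fin (n + 1) → ℝ) ∈ simplexSet (n + 1) s t ↔
      r ∈ Set.Ioo s t ∧ v ∈ simplexSet n s r := by
  simp only [simplexSet, Set.mem_ofPred_eq, Fin.forall_fin_succ', Fin.snoc_castSucc, Fin.snoc_last,
    Fin.castSucc_lt_castSucc_iff, Fin.castSucc_lt_last, Set.mem_Ioo, lt_irrefl, forall_true_left,
    IsEmpty.forall_iff, and_true]
  constructor
  · rintro ⟨⟨h1, h2⟩, h3, -⟩
    exact ⟨h2, fun i => ⟨(h1 i).1, (h3 i).2⟩, fun i => (h3 i).1⟩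
  · rintro ⟨h2, h1, h3⟩
    exact ⟨⟨fun i => ⟨(h1 i).1, (h1 i).2.trans h2.2⟩, h2⟩, fun i => ⟨h3 i, (h1 i).2⟩,
      fun i hi => absurd hi (Fin.le_last _).not_gt⟩

/-- Fubini on the simplex, separating the largest variable. -/
theorem setIntegral_simplexSet_succ {s t : ℝ} (hst : s ≤ t) {n : ℕ} {g : Fin (n + 1) → ℝ → ℝ}
    (hg : ∀ k, Continuous (g k)) :
    ∫ u in simplexSet (n + 1) s t, ∏ k, g k (u k) =
      ∫ r in s..t, g (Fin.last n) r *
        ∫ v in simplexSet n s r, ∏ k : Fin n, g k.castSucc (v k) := by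
  let e := (MeasurableEquiv.piFinSuccAbove (fun _ : Fin (n + 1) => ℝ) (Fin.last n)).symm
  have he : MeasurePreserving e := (volume_preserving_piFinSuccAbove _ (Fin.last n)).symm
  have e_apply (r : ℝ) (v : Fin n → ℝ) : e (r, v) = Fin.snoc v r := by
    simp [e, MeasurableEquiv.piFinSuccAbove, Fin.insertNthEquiv]
  set F : (Fin (n + 1) → ℝ) → ℝ := fun u => ∏ k, g k (u k) with hFdef
  have hF : Continuous F := by fun_prop
  have hFi : Integrable ((simplexSet (n + 1) s t).indicator F) :=
    (integrableOn_simplexSet s t hF).integrable_indicator (measurableSet_simplexSet _ _ _)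
  have hFe : Integrable fun p => (simplexSet (n + 1) s t).indicator F (e p) :=
    (he.integrable_comp_emb e.measurableEmbedding).2 hFi
  change ∫ u in simplexSet (n + 1) s t, F u = _
  rw [← integral_indicator (measurableSet_simplexSet _ _ _), ← he.integral_comp',
    Measure.volume_eq_prod, integral_prod _ hFe, intervalIntegral.integral_of_le hst,
    integral_Ioc_eq_integral_Ioo, ← integral_indicator measurableSet_Ioo]
  congr 1 with r
  by_cases hr : r ∈ Set.Ioo s t
  · rw [Set.indicator_of_mem hr, ← integral_const_mul,
      ← integral_indicator (measurableSet_simplexSet _ _ _)]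
    congr 1 with v
    by_cases hv : v ∈ simplexSet n s r
    · rw [e_apply, Set.indicator_of_mem hv,
        Set.indicator_of_mem (snoc_mem_simplexSet_iff.2 ⟨hr, hv⟩), hFdef]
      simp [Fin.prod_univ_castSucc, mul_comm]
    · rw [e_apply, Set.indicator_of_notMem hv,
        Set.indicator_of_notMem fun h => hv (snoc_mem_simplexSet_iff.1 h).2]
  · rw [Set.indicator_of_notMem hr]
    refine integral_eq_zero_of_ae (.of_forall fun v => ?_)
    dsimp only
    rw [e_apply, Set.indicator_of_notMem fun h => hr (snoc_mem_simplexSet_iff.1 h).1]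
    rfl

theorem setIntegral_simplexSet_eq_iteratedIntegral {s t : ℝ} (hst : s ≤ t) {n : ℕ}
    {g : Fin n → ℝ → ℝ} (hg : ∀ k, Continuous (g k)) :
    ∫ u in simplexSet n s t, ∏ k, g k (u k) = iteratedIntegral s n g t := by
  induction n generalizing t with
  | zero => simp [iteratedIntegral, simplexSet, Measure.real, volume_pi]
  | succ n ih =>
    rw [setIntegral_simplexSet_succ hst hg, iteratedIntegral]
    refine intervalIntegral.integral_congr fun r hr => ?_
    rw [Set.uIcc_of_le hst] at hr
    rw [ih hr.1 fun k => hg k.castSucc]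

theorem sigCoeff_eq_iteratedIntegral {d : ℕ} {X : ℝ → Fin d → ℝ}
    (hX : ∀ j, ContDiff ℝ 1 (fun r => X r j)) {s t : ℝ} (hst : s ≤ t) (n : ℕ) (w : ℕ → Fin d) :
    sigCoeff X s t n w = iteratedIntegral s n (fun k => deriv fun r => X r (w k)) t := by
  rcases n with _ | n
  · simp [sigCoeff, iteratedIntegral]
  · rw [sigCoeff, if_neg n.succ_ne_zero,
      ← setIntegral_simplexSet_eq_iteratedIntegral hst fun k => (hX _).continuous_deriv_one]

theorem flipCoeff_eq_iteratedIntegral {d : ℕ} {X : ℝ → Fin d → ℝ}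
    (hX : ∀ j, ContDiff ℝ 1 (fun r => X r j)) {s t : ℝ} (hst : s ≤ t) (n : ℕ) (w : ℕ → Fin d) :
    flipCoeff X s t n w = iteratedIntegral s n (fun k => deriv fun r => X r (w k.rev)) t := by
  rcases n with _ | n
  · simp [flipCoeff, iteratedIntegral]
  · rw [flipCoeff, if_neg n.succ_ne_zero,
      ← setIntegral_simplexSet_eq_iteratedIntegral hst fun k => (hX _).continuous_deriv_one]
    congr 1 with u
    exact Fintype.prod_equiv Fin.revPerm _ _ fun k => by simp

/-- The alternating convolution of forward and reversed iterated integrals vanishes: its derivative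
in `t` telescopes to zero, and it vanishes at `t = s`. -/
theorem sum_iteratedIntegral_mul_rev_eq_zero {f : ℕ → ℝ → ℝ} (hf : ∀ i, Continuous (f i))
    (s t : ℝ) (n : ℕ) :
    ∑ k ∈ Finset.range (n + 2), (-1 : ℝ) ^ (n + 1 - k) *
      iteratedIntegral s k (fun i => f i) t *
      iteratedIntegral s (n + 1 - k) (fun i => f (k + i.rev)) t = 0 := by
  set P : ℕ → ℝ → ℝ := fun k => iteratedIntegral s k (fun i => f i)
  set Q : ℕ → ℕ → ℝ → ℝ := fun m k => iteratedIntegral s m (fun i => f (k + i.rev)) with hQ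
  have hPd (k : ℕ) (x : ℝ) : HasDerivAt (P (k + 1)) (f k x * P k x) x :=
    hasDerivAt_iteratedIntegral_succ s (fun i => hf i) x
  have hQd (m k : ℕ) (x : ℝ) : HasDerivAt (Q (m + 1) k) (f k x * Q m (k + 1) x) x := by
    have h := hasDerivAt_iteratedIntegral_succ s (n := m) (g := fun i => f (k + i.rev))
      (fun i => hf _) x
    simpa [hQ, Fin.rev_castSucc, add_assoc, add_comm, add_left_comm] using h
  let H : ℝ → ℝ := fun x => ∑ k ∈ Finset.range (n + 2), (-1 : ℝ) ^ (n + 1 - k) * P k x *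
    Q (n + 1 - k) k x
  let dP : ℕ → ℝ → ℝ := fun k x => k.casesOn 0 fun j => f j x * P j x
  let dQ : ℕ → ℕ → ℝ → ℝ := fun m k x => m.casesOn 0 fun j => f k x * Q j (k + 1) x
  have hasDerivAt_P (k : ℕ) (x : ℝ) : HasDerivAt (P k) (dP k x) x := by
    cases k with
    | zero => exact hasDerivAt_const x 1
    | succ k => exact hPd k x
  have hasDerivAt_Q (m k : ℕ) (x : ℝ) : HasDerivAt (Q m k) (dQ m k x) x := by
    cases m with
    | zero => exact hasDerivAt_const x 1
    | succ m => exact hQd m k x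
  have hH (x : ℝ) : HasDerivAt H 0 x := by
    have h := HasDerivAt.fun_sum (u := Finset.range (n + 2)) fun k _ =>
      ((hasDerivAt_P k x).const_mul ((-1 : ℝ) ^ (n + 1 - k))).mul (hasDerivAt_Q (n + 1 - k) k x)
    refine h.congr_deriv ?_
    rw [Finset.sum_add_distrib, Finset.sum_range_succ', Finset.sum_range_succ _ (n + 1)]
    rw [Nat.sub_self, show dP 0 x = 0 from rfl, show dQ 0 (n + 1) x = 0 from rfl, mul_zero,
      mul_zero, zero_mul, add_zero, add_zero, ← Finset.sum_add_distrib]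
    refine Finset.sum_eq_zero fun k hk => ?_
    obtain ⟨m, rfl⟩ := Nat.exists_eq_add_of_le (Finset.mem_range_succ_iff.1 hk)
    rw [show k + m + 1 - (k + 1) = m by omega, show k + m + 1 - k = m + 1 by omega,
      show dP (k + 1) x = f k x * P k x from rfl,
      show dQ (m + 1) k x = f k x * Q m (k + 1) x from rfl]
    ring
  have hHs : H s = 0 := by
    refine Finset.sum_eq_zero fun k _ => ?_
    rcases k with _ | k
    · exact mul_eq_zero_of_right _ (iteratedIntegral_succ_self s n _)
    · exact mul_eq_zero_of_left
        (mul_eq_zero_of_right _ (iteratedIntegral_succ_self s k _)) _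
  exact (is_const_of_deriv_eq_zero (fun x => (hH x).differentiableAt) (fun x => (hH x).deriv)
    t s).trans hHs

/-- The flip signature is the image of the group inverse of the signature under the
involution `Γ`: for every nonempty word the convolution of `Γ S` with `S♭` vanishes. -/
theorem flip_signature_is_gamma_inverse {d : ℕ} (X : ℝ → Fin d → ℝ)
    (hX : ∀ j, ContDiff ℝ 1 (fun r => X r j)) (s t : ℝ) (hst : s ≤ t)
    (n : ℕ) (hn : 1 ≤ n) (w : ℕ → Fin d) :
    ∑ k ∈ Finset.range (n + 1),
      (-1 : ℝ) ^ (n - k) * sigCoeff X s t k w * flipCoeff X s t (n - k) (fun i => w (k + i))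
      = 0 := by
  obtain ⟨n, rfl⟩ := Nat.exists_eq_add_of_le' hn
  simp only [sigCoeff_eq_iteratedIntegral hX hst, flipCoeff_eq_iteratedIntegral hX hst]
  exact sum_iteratedIntegral_mul_rev_eq_zero (f := fun i => deriv fun r => X r (w i))
    (fun i => (hX (w i)).continuous_deriv_one) s t n
end

section
/- Let N ≥ 1 be an integer, X : ℝ → ℝ continuously differentiable, and b_0 = 1, b_1, b_2, … real constants. Then for every l ≥ 1 and every t ∈ [0,N], the forward sawtooth function satisfies Z^+_l(t) = Σ_{j=0}^{l} ((X_t − X_0)^{l−j}/(l−j)!)·b_j − Σ_{k=0}^{⌊t⌋−1} ((X_t − X_{k+1})^{l−1}/(l−1)!)·(X_{k+1} − X_k). -/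
open scoped Nat
open MeasureTheory

theorem integral_deriv_mul_pow_div_factorial {X : ℝ → ℝ} (hX : ContDiff ℝ 1 X) (c : ℝ) (m : ℕ)
    (a t : ℝ) :
    ∫ s in a..t, deriv X s * ((X s - c) ^ m / (m ! : ℝ)) =
      (X t - c) ^ (m + 1) / ((m + 1)! : ℝ) - (X a - c) ^ (m + 1) / ((m + 1)! : ℝ) := by
  have hcont := hX.continuous
  have hderiv := hX.continuous_deriv le_rfl
  refine intervalIntegral.integral_eq_sub_of_hasDerivAt
    (f := fun s => (X s - c) ^ (m + 1) / ((m + 1)! : ℝ)) (fun s _ => ?_)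
    (Continuous.intervalIntegrable (by fun_prop) a t)
  have h := (((hX.differentiable one_ne_zero s).hasDerivAt.sub_const c).pow (m + 1)).div_const
    ((m + 1)! : ℝ)
  refine h.congr_deriv ?_
  rw [Nat.factorial_succ]
  push_cast
  have : (m ! : ℝ) ≠ 0 := by positivity
  have : (m : ℝ) + 1 ≠ 0 := by positivity
  field_simp

theorem intervalIntegrable_indicator_Ici {f : ℝ → ℝ} (hf : Continuous f) (a u v : ℝ) :
    IntervalIntegrable ((Set.Ici a).indicator f) volume u v :=
  ⟨(hf.intervalIntegrable u v).1.indicator measurableSet_Ici,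
    (hf.intervalIntegrable u v).2.indicator measurableSet_Ici⟩

theorem integral_indicator_Ici {f : ℝ → ℝ} (hf : Continuous f) {a u v : ℝ} (hua : u ≤ a)
    (hav : a ≤ v) : ∫ s in u..v, (Set.Ici a).indicator f s = ∫ s in a..v, f s := by
  rw [← intervalIntegral.integral_add_adjacent_intervals
    (intervalIntegrable_indicator_Ici hf a u a) (intervalIntegrable_indicator_Ici hf a a v)]
  have hleft : ∫ s in u..a, (Set.Ici a).indicator f s = 0 := by
    refine intervalIntegral.integral_zero_ae ?_
    filter_upwards [Measure.ae_ne volume a] with s hs hmem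
    rw [Set.uIoc_of_le hua] at hmem
    exact Set.indicator_of_notMem (fun h => hs (le_antisymm hmem.2 h)) f
  have hright : ∫ s in a..v, (Set.Ici a).indicator f s = ∫ s in a..v, f s := by
    refine intervalIntegral.integral_congr fun s hs => ?_
    rw [Set.uIcc_of_le hav] at hs
    exact Set.indicator_of_mem hs.1 f
  rw [hleft, hright, zero_add]

theorem sum_range_floor_eq_sum_indicator (g : ℕ → ℝ → ℝ) {s t : ℝ} (hst : s ≤ t) :
    ∑ k ∈ Finset.range ⌊s⌋.toNat, g k s =
      ∑ k ∈ Finset.range ⌊t⌋.toNat, (Set.Ici ((k : ℝ) + 1)).indicator (g k) s := by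
  have hle : ⌊s⌋.toNat ≤ ⌊t⌋.toNat := Int.toNat_le_toNat (Int.floor_le_floor hst)
  have hmem (k : ℕ) : s ∈ Set.Ici ((k : ℝ) + 1) ↔ k < ⌊s⌋.toNat := by
    rw [Int.lt_toNat, ← Int.add_one_le_iff, Int.le_floor]
    simp
  rw [← Finset.sum_subset (Finset.range_mono hle) (fun k _ hk =>
    Set.indicator_of_notMem (by rwa [hmem, ← Finset.mem_range]) (g k))]
  exact Finset.sum_congr rfl fun k hk =>
    (Set.indicator_of_mem ((hmem k).2 (Finset.mem_range.1 hk)) (g k)).symm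

theorem integral_sum_range_floor {g : ℕ → ℝ → ℝ} (hg : ∀ k, Continuous (g k)) {t : ℝ}
    (ht : 0 ≤ t) :
    IntervalIntegrable (fun s => ∑ k ∈ Finset.range ⌊s⌋.toNat, g k s) volume 0 t ∧
      ∫ s in (0 : ℝ)..t, ∑ k ∈ Finset.range ⌊s⌋.toNat, g k s =
        ∑ k ∈ Finset.range ⌊t⌋.toNat, ∫ s in ((k : ℝ) + 1)..t, g k s := by
  have hEq : Set.EqOn (fun s => ∑ k ∈ Finset.range ⌊s⌋.toNat, g k s)
      (fun s => ∑ k ∈ Finset.range ⌊t⌋.toNat, (Set.Ici ((k : ℝ) + 1)).indicator (g k) s)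
      (Set.uIcc 0 t) := fun s hs => by
    rw [Set.uIcc_of_le ht] at hs
    exact sum_range_floor_eq_sum_indicator g hs.2
  have hint (k : ℕ) := intervalIntegrable_indicator_Ici (hg k) ((k : ℝ) + 1) 0 t
  constructor
  · refine IntervalIntegrable.congr (fun s hs => (hEq (Set.uIoc_subset_uIcc hs)).symm) ?_
    simpa only [Finset.sum_fn] using IntervalIntegrable.sum (Finset.range ⌊t⌋.toNat)
      (fun k _ => hint k)
  · rw [intervalIntegral.integral_congr hEq, intervalIntegral.integral_finsetSum
      (fun k _ => hint k)]
    refine Finset.sum_congr rfl fun k hk => integral_indicator_Ici (hg k) (by positivity) ?_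
    have hk' := Finset.mem_range.1 hk
    rw [Int.lt_toNat, ← Int.add_one_le_iff, Int.le_floor] at hk'
    exact_mod_cast hk'

/-- Explicit formula for the forward sawtooth functions `Z⁺_l` of a one-dimensional path,
in terms of the flip signature (powers of increments) and the initial data `b`. -/
theorem forward_sawtooth_explicit (N : ℕ) (hN : 1 ≤ N) (X : ℝ → ℝ) (hX : ContDiff ℝ 1 X)
    (b : ℕ → ℝ) (hb0 : b 0 = 1) (Z : ℕ → ℝ → ℝ)
    (hZ1 : ∀ t : ℝ, Z 1 t = X t - X (⌊t⌋ : ℝ) + b 1)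
    (hZrec : ∀ l, 2 ≤ l → ∀ t : ℝ,
      Z l t = b l + ∫ s in (0:ℝ)..t, deriv X s * Z (l - 1) s)
    (l : ℕ) (hl : 1 ≤ l) (t : ℝ) (ht : t ∈ Set.Icc (0:ℝ) (N:ℝ)) :
    Z l t =
      (∑ j ∈ Finset.range (l + 1), (X t - X 0) ^ (l - j) / ((l - j)! : ℝ) * b j)
      - ∑ k ∈ Finset.range (⌊t⌋.toNat),
          (X t - X ((k : ℝ) + 1)) ^ (l - 1) / ((l - 1)! : ℝ) * (X ((k : ℝ) + 1) - X (k : ℝ)) := by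
  have hcont := hX.continuous
  have hderiv := hX.continuous_deriv le_rfl
  induction l, hl using Nat.le_induction generalizing t with
  | base =>
    have htel := Finset.sum_range_sub (fun k : ℕ => X k) ⌊t⌋.toNat
    have hfloor : ((⌊t⌋.toNat : ℕ) : ℝ) = (⌊t⌋ : ℝ) := by
      exact_mod_cast Int.toNat_of_nonneg (Int.floor_nonneg.2 ht.1)
    rw [hfloor] at htel
    push_cast at htel
    simp [hZ1, Finset.sum_range_succ, hb0, htel]
    ring
  | succ l hl ih =>
    obtain ⟨m, rfl⟩ : ∃ m, l = m + 1 := ⟨l - 1, by omega⟩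
    simp only [Nat.add_sub_cancel] at ih ⊢
    rw [hZrec _ (by omega)]
    have hEq : Set.EqOn (fun s => deriv X s * Z (m + 1 + 1 - 1) s)
        (fun s => (∑ j ∈ Finset.range (m + 1 + 1),
            deriv X s * ((X s - X 0) ^ (m + 1 - j) / ((m + 1 - j)! : ℝ)) * b j) -
          ∑ k ∈ Finset.range ⌊s⌋.toNat,
            deriv X s * ((X s - X ((k : ℝ) + 1)) ^ m / (m ! : ℝ)) *
              (X ((k : ℝ) + 1) - X (k : ℝ))) (Set.uIcc 0 t) := fun s hs => by
      rw [Set.uIcc_of_le ht.1] at hs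
      simp only [Nat.add_sub_cancel]
      rw [ih s ⟨hs.1, hs.2.trans ht.2⟩, mul_sub, Finset.mul_sum, Finset.mul_sum]
      simp only [mul_assoc]
    obtain ⟨hint, hval⟩ := integral_sum_range_floor (g := fun k s =>
      deriv X s * ((X s - X ((k : ℝ) + 1)) ^ m / (m ! : ℝ)) * (X ((k : ℝ) + 1) - X (k : ℝ)))
      (fun k => by fun_prop) ht.1
    rw [intervalIntegral.integral_congr hEq, intervalIntegral.integral_sub
      (Continuous.intervalIntegrable (by fun_prop) _ _) hint, hval,
      intervalIntegral.integral_finsetSum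
        (fun j _ => Continuous.intervalIntegrable (by fun_prop) _ _)]
    simp only [intervalIntegral.integral_mul_const, integral_deriv_mul_pow_div_factorial hX,
      sub_self, zero_pow (Nat.succ_ne_zero _), zero_div, sub_zero]
    rw [Finset.sum_range_succ _ (m + 1 + 1)]
    have hsum : ∑ j ∈ Finset.range (m + 1 + 1),
        (X t - X 0) ^ (m + 1 - j + 1) / ((m + 1 - j + 1)! : ℝ) * b j =
        ∑ j ∈ Finset.range (m + 1 + 1),
          (X t - X 0) ^ (m + 1 + 1 - j) / ((m + 1 + 1 - j)! : ℝ) * b j :=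
      Finset.sum_congr rfl fun j hj => by
        rw [Nat.sub_add_comm (n := m + 1) (m := 1) (Nat.lt_succ_iff.1 (Finset.mem_range.1 hj))]
    rw [hsum]
    simp
    ring
end

section
/- Let N ≥ 1 be an integer, X : ℝ → ℝ continuously differentiable and constant on [N,∞), and b_0 = 1, b_1, b_2, … real constants. Then for every l ≥ 1 and every t ∈ [0,N], the backward sawtooth function satisfies Z^-_l(t) = Σ_{j=0}^{l} ((X_t − X_0)^{l−j}/(l−j)!)·b_j − Σ_{k=0}^{⌊t⌋} ((X_t − X_k)^{l−1}/(l−1)!)·(X_{k+1} − X_k). -/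
open scoped Nat
open MeasureTheory

/-- The divided power `(X s - X c) ^ m / m!` of the increment of `X` after time `c`,
set to zero before time `c`. -/
noncomputable def truncatedDividedPower (X : ℝ → ℝ) (c : ℝ) (m : ℕ) (s : ℝ) : ℝ :=
  if c ≤ s then (X s - X c) ^ m / (m ! : ℝ) else 0

lemma truncatedDividedPower_succ_eq_max (X : ℝ → ℝ) (c : ℝ) (m : ℕ) (s : ℝ) :
    truncatedDividedPower X c (m + 1) s =
      (X (max s c) - X c) ^ (m + 1) / ((m + 1)! : ℝ) := by
  unfold truncatedDividedPower
  split_ifs with h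
  · rw [max_eq_left h]
  · rw [max_eq_right (not_le.1 h).le]
    simp

lemma intervalIntegrable_deriv_mul_truncatedDividedPower {X : ℝ → ℝ} (hX : ContDiff ℝ 1 X)
    (c : ℝ) (m : ℕ) (a t : ℝ) :
    IntervalIntegrable (fun s => deriv X s * truncatedDividedPower X c m s) volume a t := by
  have hd : Continuous (deriv X) := hX.continuous_deriv le_rfl
  have hXc : Continuous X := hX.continuous
  have hg : Continuous fun s => deriv X s * ((X s - X c) ^ m / (m ! : ℝ)) := by fun_prop
  have heq : (fun s => deriv X s * truncatedDividedPower X c m s) =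
      (Set.Ici c).indicator fun s => deriv X s * ((X s - X c) ^ m / (m ! : ℝ)) := by
    ext s
    simp [truncatedDividedPower, Set.indicator_apply]
  have hi := hg.intervalIntegrable (μ := volume) a t
  rw [heq]
  exact ⟨hi.1.indicator measurableSet_Ici, hi.2.indicator measurableSet_Ici⟩

lemma hasDerivWithinAt_truncatedDividedPower_succ {X : ℝ → ℝ} (hX : ContDiff ℝ 1 X)
    (c : ℝ) (m : ℕ) (s : ℝ) :
    HasDerivWithinAt (truncatedDividedPower X c (m + 1))
      (deriv X s * truncatedDividedPower X c m s) (Set.Ioi s) s := by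
  rcases le_or_gt c s with h | h
  · have hXs : HasDerivAt X (deriv X s) s :=
      (hX.differentiable one_ne_zero s).hasDerivAt
    have hpow := (((hXs.sub_const (X c)).pow (m + 1)).div_const ((m + 1)! : ℝ)).hasDerivWithinAt
      (s := Set.Ioi s)
    refine (hpow.congr (fun x hx => ?_) ?_).congr_deriv ?_
    · simp [truncatedDividedPower, h.trans (le_of_lt hx)]
    · simp [truncatedDividedPower, h]
    · rw [truncatedDividedPower, if_pos h, Nat.factorial_succ]
      have := Nat.factorial_ne_zero m
      push_cast
      field_simp
  · have hzero : truncatedDividedPower X c (m + 1) =ᶠ[nhds s] fun _ => 0 := by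
      filter_upwards [Iio_mem_nhds h] with x hx
      simp [truncatedDividedPower, not_le.2 (Set.mem_Iio.1 hx)]
    have := ((hasDerivAt_const s (0 : ℝ)).congr_of_eventuallyEq hzero).hasDerivWithinAt
      (s := Set.Ioi s)
    simpa [truncatedDividedPower, not_le.2 h] using this

lemma integral_deriv_mul_truncatedDividedPower {X : ℝ → ℝ} (hX : ContDiff ℝ 1 X)
    {a c : ℝ} (hac : a ≤ c) (m : ℕ) (t : ℝ) :
    ∫ s in a..t, deriv X s * truncatedDividedPower X c m s =
      truncatedDividedPower X c (m + 1) t := by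
  have hXc : Continuous X := hX.continuous
  have hcont : Continuous (truncatedDividedPower X c (m + 1)) := by
    rw [funext (truncatedDividedPower_succ_eq_max X c m)]
    fun_prop
  rw [intervalIntegral.integral_eq_sub_of_hasDeriv_right hcont.continuousOn
    (fun s _ => hasDerivWithinAt_truncatedDividedPower_succ hX c m s)
    (intervalIntegrable_deriv_mul_truncatedDividedPower hX c m a t),
    truncatedDividedPower_succ_eq_max X c m a, max_eq_right hac]
  simp

lemma sum_range_floor_add_one_eq_sum_ite (f : ℕ → ℝ) {s : ℝ} (hs : 0 ≤ s) {n : ℕ}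
    (hn : s < n) :
    ∑ k ∈ Finset.range (⌊s⌋.toNat + 1), f k =
      ∑ k ∈ Finset.range n, if (k : ℝ) ≤ s then f k else 0 := by
  rw [← Finset.sum_filter]
  congr 1
  ext k
  simp only [Finset.mem_range, Finset.mem_filter, Int.floor_toNat, Nat.lt_succ_iff,
    Nat.le_floor_iff hs]
  exact ⟨fun h => ⟨by exact_mod_cast h.trans_lt hn, h⟩, fun h => h.2⟩

/-- On `[0, n)` the backward sawtooth functions are linear combinations of truncated divided
powers whose coefficients do not depend on time. -/
lemma backward_sawtooth_eq_sum_truncatedDividedPower {X : ℝ → ℝ} (hX : ContDiff ℝ 1 X)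
    {b : ℕ → ℝ} (hb0 : b 0 = 1) {Z : ℕ → ℝ → ℝ}
    (hZ1 : ∀ t : ℝ, Z 1 t = X t - X ((⌊t⌋ : ℝ) + 1) + b 1)
    (hZrec : ∀ l, 2 ≤ l → ∀ t : ℝ,
      Z l t = b l + ∫ s in (0:ℝ)..t, deriv X s * Z (l - 1) s)
    (n m : ℕ) {t : ℝ} (ht : 0 ≤ t) (htn : t < n) :
    Z (m + 1) t =
      ∑ j ∈ Finset.range (m + 2), truncatedDividedPower X 0 (m + 1 - j) t * b j
      - ∑ k ∈ Finset.range n,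
          truncatedDividedPower X k m t * (X ((k : ℝ) + 1) - X (k : ℝ)) := by
  induction m generalizing t with
  | zero =>
    have hsum := sum_range_floor_add_one_eq_sum_ite
      (fun k => X ((k : ℝ) + 1) - X (k : ℝ)) ht htn
    have htel := Finset.sum_range_sub (fun k : ℕ => X (k : ℝ)) (⌊t⌋.toNat + 1)
    have hfloor : ((⌊t⌋.toNat : ℕ) : ℝ) = (⌊t⌋ : ℝ) := by
      exact_mod_cast congrArg (Int.cast (R := ℝ)) (Int.toNat_of_nonneg (Int.floor_nonneg.2 ht))
    push_cast at htel
    rw [htel, hfloor] at hsum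
    simp only [truncatedDividedPower, ite_mul, zero_mul, pow_zero, Nat.factorial_zero,
      Nat.cast_one, div_one, one_mul]
    rw [← hsum, hZ1]
    simp [Finset.sum_range_succ, ht, hb0]
    ring
  | succ m ih =>
    have hintegrable := fun c m => intervalIntegrable_deriv_mul_truncatedDividedPower hX c m 0 t
    have hintegrand : ∀ s ∈ Set.uIcc 0 t, deriv X s * Z (m + 1) s =
        ∑ j ∈ Finset.range (m + 2),
          deriv X s * truncatedDividedPower X 0 (m + 1 - j) s * b j
        - ∑ k ∈ Finset.range n,
          deriv X s * truncatedDividedPower X k m s * (X ((k : ℝ) + 1) - X (k : ℝ)) := by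
      intro s hs
      rw [Set.uIcc_of_le ht] at hs
      rw [ih hs.1 (hs.2.trans_lt htn), mul_sub, Finset.mul_sum, Finset.mul_sum]
      simp only [mul_assoc]
    have hlast : truncatedDividedPower X 0 (m + 1 + 1 - (m + 2)) t * b (m + 2) = b (m + 2) := by
      simp [truncatedDividedPower, ht]
    rw [hZrec (m + 1 + 1) (by omega), Nat.add_sub_cancel,
      intervalIntegral.integral_congr hintegrand, intervalIntegral.integral_sub,
      intervalIntegral.integral_finsetSum fun j _ => (hintegrable 0 (m + 1 - j)).mul_const _,
      intervalIntegral.integral_finsetSum fun (k : ℕ) _ => (hintegrable k m).mul_const _,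
      Finset.sum_range_succ _ (m + 2), hlast]
    · simp only [intervalIntegral.integral_mul_const,
        integral_deriv_mul_truncatedDividedPower hX le_rfl,
        integral_deriv_mul_truncatedDividedPower hX (Nat.cast_nonneg _)]
      have hidx : ∀ j ∈ Finset.range (m + 2),
          truncatedDividedPower X 0 (m + 1 - j + 1) t * b j =
            truncatedDividedPower X 0 (m + 1 + 1 - j) t * b j := by
        intro j hj
        rw [Nat.sub_add_comm (Nat.lt_succ_iff.1 (Finset.mem_range.1 hj))]
      rw [Finset.sum_congr rfl hidx]
      ring
    · simpa only [Finset.sum_fn] using IntervalIntegrable.sum (Finset.range (m + 2))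
        fun j _ => (hintegrable 0 (m + 1 - j)).mul_const (b j)
    · simpa only [Finset.sum_fn] using IntervalIntegrable.sum (Finset.range n)
        fun k _ => (hintegrable (k : ℕ) m).mul_const (X ((k : ℝ) + 1) - X (k : ℝ))

/-- Explicit formula for the backward sawtooth functions `Z⁻_l` of a one-dimensional path,
in terms of the flip signature (powers of increments) and the initial data `b`. -/
theorem backward_sawtooth_explicit (N : ℕ) (hN : 1 ≤ N) (X : ℝ → ℝ) (hX : ContDiff ℝ 1 X)
    (hXN : ∀ u : ℝ, (N : ℝ) ≤ u → X u = X (N : ℝ))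
    (b : ℕ → ℝ) (hb0 : b 0 = 1) (Z : ℕ → ℝ → ℝ)
    (hZ1 : ∀ t : ℝ, Z 1 t = X t - X ((⌊t⌋ : ℝ) + 1) + b 1)
    (hZrec : ∀ l, 2 ≤ l → ∀ t : ℝ,
      Z l t = b l + ∫ s in (0:ℝ)..t, deriv X s * Z (l - 1) s)
    (l : ℕ) (hl : 1 ≤ l) (t : ℝ) (ht : t ∈ Set.Icc (0:ℝ) (N:ℝ)) :
    Z l t =
      (∑ j ∈ Finset.range (l + 1), (X t - X 0) ^ (l - j) / ((l - j)! : ℝ) * b j)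
      - ∑ k ∈ Finset.range (⌊t⌋.toNat + 1),
          (X t - X (k : ℝ)) ^ (l - 1) / ((l - 1)! : ℝ) * (X ((k : ℝ) + 1) - X (k : ℝ)) := by
  obtain ⟨m, rfl⟩ := Nat.exists_eq_add_of_le' hl
  have htN : t < (N + 1 : ℕ) := by
    push_cast
    linarith [ht.2]
  rw [backward_sawtooth_eq_sum_truncatedDividedPower hX hb0 hZ1 hZrec (N + 1) m ht.1 htN,
    sum_range_floor_add_one_eq_sum_ite _ ht.1 htN]
  simp only [truncatedDividedPower, if_pos ht.1, ite_mul, zero_mul, Nat.add_sub_cancel]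
end

section
/- Let N ≥ 1 and m ≥ 2 be integers, let X : ℝ → ℝ be continuously differentiable and constant on (−∞,0] and on [N,∞), let b_0 = 1, b_1,…,b_m ∈ ℝ, and let Y^0, Y^1, …, Y^m : [0,N] → ℝ be continuous functions satisfying Y^k(t) = Y^k(0) + ∫_0^t Y^{k+1}(s)·X'(s) ds for all 0 ≤ k ≤ m−1 (a controlled integrand of X). Then the forward preliminary Euler–Maclaurin formula holds: Σ_{k=0}^{N−1} Y^0(k+1)·(X_{k+1} − X_k) = ∫_0^N Y^0(t)·X'(t) dt − b_1·(Y^0(N) − Y^0(0)) + Σ_{l=2}^{m} (−1)^l·(Y^{l−1}(N)·Z^+_l(N) − Y^{l−1}(0)·Z^+_l(0)) + (−1)^{m+1}·∫_0^N Y^m(t)·Z^+_m(t)·X'(t) dt. -/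
open scoped Nat
open MeasureTheory

/-- **Integration by parts** for two functions that are primitives of interval integrable
functions. -/
theorem integral_mul_eq_sub_of_eq_primitive {u v u' v' : ℝ → ℝ} {a b : ℝ}
    (hu' : IntervalIntegrable u' volume a b) (hv' : IntervalIntegrable v' volume a b)
    (hu : ∀ t ∈ Set.uIcc a b, u t = u a + ∫ s in a..t, u' s)
    (hv : ∀ t ∈ Set.uIcc a b, v t = v a + ∫ s in a..t, v' s) :
    ∫ t in a..b, u t * v' t = u b * v b - u a * v a - ∫ t in a..b, u' t * v t := by
  have ac_primitive {w' : ℝ → ℝ} (hw' : IntervalIntegrable w' volume a b) (c : ℝ) :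
      AbsolutelyContinuousOnInterval (fun t => c + ∫ s in a..t, w' s) a b :=
    ((LipschitzWith.const c).lipschitzOnWith.absolutelyContinuousOnInterval).fun_add
      (hw'.absolutelyContinuousOnInterval_intervalIntegral Set.left_mem_uIcc)
  have ae_deriv {w' : ℝ → ℝ} (hw' : IntervalIntegrable w' volume a b) (c : ℝ) :
      ∀ᵐ t, t ∈ Set.uIcc a b → deriv (fun t => c + ∫ s in a..t, w' s) t = w' t := by
    filter_upwards [hw'.ae_hasDerivAt_integral] with t ht hmem
    exact ((ht hmem a Set.left_mem_uIcc).const_add c).deriv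
  have key := (ac_primitive hu' (u a)).integral_mul_deriv_eq_deriv_mul (ac_primitive hv' (v a))
  rw [← hu b Set.right_mem_uIcc, ← hv b Set.right_mem_uIcc, ← hu a Set.left_mem_uIcc,
    ← hv a Set.left_mem_uIcc] at key
  convert key using 1
  · refine intervalIntegral.integral_congr_ae ?_
    filter_upwards [ae_deriv hv' (v a)] with t ht hmem
    have hmem' := Set.uIoc_subset_uIcc hmem
    rw [ht hmem', ← hu t hmem']
  · congr 1
    refine intervalIntegral.integral_congr_ae ?_
    filter_upwards [ae_deriv hu' (u a)] with t ht hmem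
    have hmem' := Set.uIoc_subset_uIcc hmem
    rw [ht hmem', ← hv t hmem']

theorem floor_eq_of_mem_Ioo {k : ℕ} {t : ℝ} (ht : t ∈ Set.Ioo (k : ℝ) ((k + 1 : ℕ) : ℝ)) :
    ⌊t⌋ = (k : ℤ) :=
  Int.floor_eq_iff.mpr ⟨by exact_mod_cast ht.1.le, by simpa using ht.2⟩

/-- On each unit cell the path `t ↦ X t - X ⌊t⌋` agrees with a continuous function, so it is
interval integrable between natural numbers. -/
theorem intervalIntegrable_sub_comp_floor {X : ℝ → ℝ} (hX : Continuous X) (N : ℕ) :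
    IntervalIntegrable (fun t => X t - X (⌊t⌋ : ℝ)) volume 0 N := by
  have h : ∀ k < N, IntervalIntegrable (fun t => X t - X (⌊t⌋ : ℝ)) volume
      ((k : ℕ) : ℝ) ((k + 1 : ℕ) : ℝ) := by
    intro k _
    refine ((hX.sub continuous_const).intervalIntegrable (μ := volume) _ _ :
      IntervalIntegrable (fun t => X t - X k) volume _ _).congr_uIoo ?_
    intro t ht
    rw [Set.uIoo_of_le (by simp)] at ht
    simp [floor_eq_of_mem_Ioo ht]
  simpa using IntervalIntegrable.trans_iterate (a := fun k : ℕ => (k : ℝ)) h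

/-- If `Y` is a primitive of `Y' · X'` on `[0, N]`, the right-endpoint Riemann–Stieltjes sum of `Y`
against `X` differs from the integral by the integral of `Y' · X'` against the sawtooth. -/
theorem sum_mul_sub_eq_integral_add_integral_sawtooth {X Y Y' : ℝ → ℝ} (hX : ContDiff ℝ 1 X)
    (N : ℕ) (hY' : ContinuousOn Y' (Set.Icc 0 (N : ℝ)))
    (hY : ∀ t ∈ Set.Icc (0 : ℝ) N, Y t = Y 0 + ∫ s in (0 : ℝ)..t, Y' s * deriv X s)
    (hYc : ContinuousOn Y (Set.Icc 0 (N : ℝ))) :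
    ∑ k ∈ Finset.range N, Y ((k : ℝ) + 1) * (X ((k : ℝ) + 1) - X (k : ℝ)) =
      (∫ t in (0 : ℝ)..N, Y t * deriv X t) +
        ∫ t in (0 : ℝ)..N, Y' t * deriv X t * (X t - X (⌊t⌋ : ℝ)) := by
  have hdX : Continuous (deriv X) := hX.continuous_deriv le_rfl
  have hN : (0 : ℝ) ≤ N := Nat.cast_nonneg N
  have hint₀ : IntervalIntegrable (fun t => Y t * deriv X t) volume 0 N :=
    (hYc.mul hdX.continuousOn).intervalIntegrable_of_Icc hN
  have hint₁ : IntervalIntegrable (fun t => Y' t * deriv X t) volume 0 N :=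
    (hY'.mul hdX.continuousOn).intervalIntegrable_of_Icc hN
  have hint₂ : IntervalIntegrable (fun t => Y' t * deriv X t * (X t - X (⌊t⌋ : ℝ))) volume 0 N :=
    (intervalIntegrable_sub_comp_floor hX.continuous N).continuousOn_mul
      (by rw [Set.uIcc_of_le hN]; exact hY'.mul hdX.continuousOn)
  have hcell {k : ℕ} (hk : k < N) :
      Set.uIcc ((k : ℕ) : ℝ) ((k + 1 : ℕ) : ℝ) ⊆ Set.uIcc (0 : ℝ) N := by
    rw [Set.uIcc_of_le (by simp), Set.uIcc_of_le hN]
    exact Set.Icc_subset_Icc (Nat.cast_nonneg k) (by exact_mod_cast hk)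
  rw [← intervalIntegral.integral_add hint₀ hint₂]
  have hsum := intervalIntegral.sum_integral_adjacent_intervals (a := fun k : ℕ => (k : ℝ))
    (n := N) (fun k hk => (hint₀.add hint₂).mono_set (hcell hk))
  simp only [Nat.cast_zero] at hsum
  refine Eq.trans (Finset.sum_congr rfl fun k hk => ?_) hsum
  have hk' := hcell (Finset.mem_range.mp hk)
  have hk0 : (k : ℝ) ∈ Set.uIcc (0 : ℝ) N := hk' Set.left_mem_uIcc
  have hparts := integral_mul_eq_sub_of_eq_primitive (u := Y) (v := fun t => X t - X k)
    (v' := deriv X) (hint₁.mono_set hk') (hdX.intervalIntegrable _ _)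
    (fun t ht => by
      have ht0 := hk' ht
      rw [← intervalIntegral.integral_interval_sub_left
        (hint₁.mono_set (Set.uIcc_subset_uIcc_left ht0))
        (hint₁.mono_set (Set.uIcc_subset_uIcc_left hk0))]
      rw [Set.uIcc_of_le hN] at ht0 hk0
      rw [hY t ht0, hY k hk0]
      ring)
    (fun t _ => by
      rw [intervalIntegral.integral_deriv_eq_sub
        (fun x _ => hX.differentiable one_ne_zero x) (hdX.intervalIntegrable _ _)]
      ring)
  have hfloor : ∫ t in ((k : ℕ) : ℝ)..((k + 1 : ℕ) : ℝ),
      Y' t * deriv X t * (X t - X (⌊t⌋ : ℝ)) =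
      ∫ t in ((k : ℕ) : ℝ)..((k + 1 : ℕ) : ℝ), Y' t * deriv X t * (X t - X k) := by
    refine intervalIntegral.integral_congr_Ioo_of_le (by simp) fun t ht => ?_
    simp [floor_eq_of_mem_Ioo ht]
  rw [intervalIntegral.integral_add (hint₀.mono_set hk') (hint₂.mono_set hk'), hfloor, hparts]
  push_cast
  ring

/-- Forward preliminary Euler–Maclaurin formula for Riemann–Stieltjes sums of a
controlled integrand `Y` along a one-dimensional path `X`, with forward sawtooth
functions `Z⁺_l` built from initial data `b`. -/
theorem forward_preliminary_euler_maclaurin (N m : ℕ) (hN : 1 ≤ N) (hm : 2 ≤ m)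
    (X : ℝ → ℝ) (hX : ContDiff ℝ 1 X)
    (hX0 : ∀ u : ℝ, u ≤ 0 → X u = X 0)
    (hXN : ∀ u : ℝ, (N : ℝ) ≤ u → X u = X (N : ℝ))
    (b : ℕ → ℝ) (hb0 : b 0 = 1)
    (Z : ℕ → ℝ → ℝ)
    (hZ1 : ∀ t : ℝ, Z 1 t = X t - X (⌊t⌋ : ℝ) + b 1)
    (hZrec : ∀ l, 2 ≤ l → ∀ t : ℝ,
      Z l t = b l + ∫ s in (0:ℝ)..t, deriv X s * Z (l - 1) s)
    (Y : ℕ → ℝ → ℝ)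
    (hYcont : ∀ k, k ≤ m → ContinuousOn (Y k) (Set.Icc 0 (N : ℝ)))
    (hYctrl : ∀ k, k ≤ m - 1 → ∀ t ∈ Set.Icc (0:ℝ) (N:ℝ),
      Y k t = Y k 0 + ∫ s in (0:ℝ)..t, Y (k + 1) s * deriv X s) :
    ∑ k ∈ Finset.range N, Y 0 ((k : ℝ) + 1) * (X ((k : ℝ) + 1) - X (k : ℝ)) =
      (∫ t in (0:ℝ)..(N:ℝ), Y 0 t * deriv X t)
      - b 1 * (Y 0 (N : ℝ) - Y 0 0)
      + (∑ l ∈ Finset.Icc 2 m,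
          (-1 : ℝ) ^ l * (Y (l - 1) (N : ℝ) * Z l (N : ℝ) - Y (l - 1) 0 * Z l 0))
      + (-1 : ℝ) ^ (m + 1) * ∫ t in (0:ℝ)..(N:ℝ), Y m t * Z m t * deriv X t := by
  have hdX : Continuous (deriv X) := hX.continuous_deriv le_rfl
  have hN0 : (0 : ℝ) ≤ N := Nat.cast_nonneg N
  have huIcc : Set.uIcc (0 : ℝ) N = Set.Icc 0 (N : ℝ) := Set.uIcc_of_le hN0
  have hYint (k : ℕ) (hk : k ≤ m) :
      IntervalIntegrable (fun t => Y k t * deriv X t) volume 0 N :=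
    ((hYcont k hk).mul hdX.continuousOn).intervalIntegrable_of_Icc hN0
  have hZint (l : ℕ) (hl : 1 ≤ l) : IntervalIntegrable (Z l) volume 0 N := by
    induction l, hl using Nat.le_induction with
    | base =>
      rw [funext hZ1]
      exact (intervalIntegrable_sub_comp_floor hX.continuous N).add intervalIntegrable_const
    | succ l hl ih =>
      rw [funext (hZrec (l + 1) (by omega))]
      exact (continuousOn_const.add (intervalIntegral.continuousOn_primitive_interval'
        (ih.continuousOn_mul hdX.continuousOn) Set.left_mem_uIcc)).intervalIntegrable
  have hZ0 (l : ℕ) (hl : 2 ≤ l) : Z l 0 = b l := by simp [hZrec l hl]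
  have hstep (l : ℕ) (hl : 1 ≤ l) (hlm : l < m) :
      ∫ t in (0 : ℝ)..N, Y l t * Z l t * deriv X t =
        (Y l N * Z (l + 1) N - Y l 0 * Z (l + 1) 0) -
          ∫ t in (0 : ℝ)..N, Y (l + 1) t * Z (l + 1) t * deriv X t := by
    have hparts := integral_mul_eq_sub_of_eq_primitive (u := Y l) (v := Z (l + 1))
      (hYint (l + 1) hlm) ((hZint l hl).continuousOn_mul hdX.continuousOn)
      (by rw [huIcc]; exact hYctrl l (by omega))
      (fun t _ => by rw [hZ0 _ (by omega), hZrec (l + 1) (by omega)]; rfl)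
    simpa only [mul_right_comm, ← mul_assoc] using hparts
  have hiter (n : ℕ) (hn : 1 ≤ n) (hnm : n ≤ m) :
      ∫ t in (0 : ℝ)..N, Y 1 t * Z 1 t * deriv X t =
        (∑ l ∈ Finset.Icc 2 n,
          (-1 : ℝ) ^ l * (Y (l - 1) (N : ℝ) * Z l (N : ℝ) - Y (l - 1) 0 * Z l 0))
        + (-1 : ℝ) ^ (n + 1) * ∫ t in (0:ℝ)..(N:ℝ), Y n t * Z n t * deriv X t := by
    induction n, hn using Nat.le_induction with
    | base => simp
    | succ n hn ih =>
      rw [ih (by omega), hstep n hn (by omega), Finset.sum_Icc_succ_top (by omega)]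
      simp only [Nat.add_sub_cancel]
      ring
  have hfirst : ∫ t in (0 : ℝ)..N, Y 1 t * Z 1 t * deriv X t =
      (∫ t in (0 : ℝ)..N, Y 1 t * deriv X t * (X t - X (⌊t⌋ : ℝ))) +
        b 1 * (Y 0 N - Y 0 0) := by
    rw [hYctrl 0 (by omega) N ⟨hN0, le_rfl⟩, add_sub_cancel_left,
      ← intervalIntegral.integral_const_mul, ← intervalIntegral.integral_add]
    · congr 1
      ext t
      rw [hZ1]
      ring
    · exact (intervalIntegrable_sub_comp_floor hX.continuous N).continuousOn_mul
        (by rw [huIcc]; exact (hYcont 1 (by omega)).mul hdX.continuousOn)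
    · exact (hYint 1 (by omega)).const_mul _
  rw [sum_mul_sub_eq_integral_add_integral_sawtooth hX N (hYcont 1 (by omega))
    (hYctrl 0 (by omega)) (hYcont 0 (by omega))]
  linarith [hiter m (by omega) le_rfl]
end

section
/- Let N ≥ 1 and m ≥ 2 be integers, let X : ℝ → ℝ be continuously differentiable and constant on (−∞,0] and on [N,∞), let b_0 = 1, b_1,…,b_m ∈ ℝ, and let Y^0, Y^1, …, Y^m : [0,N] → ℝ be continuous functions satisfying Y^k(t) = Y^k(0) + ∫_0^t Y^{k+1}(s)·X'(s) ds for all 0 ≤ k ≤ m−1 (a controlled integrand of X). Then the backward preliminary Euler–Maclaurin formula holds: Σ_{k=0}^{N−1} Y^0(k)·(X_{k+1} − X_k) = ∫_0^N Y^0(t)·X'(t) dt − b_1·(Y^0(N) − Y^0(0)) + Σ_{l=2}^{m} (−1)^l·(Y^{l−1}(N)·Z^-_l(N) − Y^{l−1}(0)·Z^-_l(0)) + (−1)^{m+1}·∫_0^N Y^m(t)·Z^-_m(t)·X'(t) dt. -/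
open scoped Nat
open MeasureTheory

/-- Integration by parts for two functions given as primitives of interval integrable functions. -/
theorem integral_mul_eq_sub_of_eq_primitive_s9 {f g f' g' : ℝ → ℝ} {a b : ℝ}
    (hf' : IntervalIntegrable f' volume a b) (hg' : IntervalIntegrable g' volume a b)
    (hf : ∀ t ∈ Set.uIcc a b, f t = f a + ∫ s in a..t, f' s)
    (hg : ∀ t ∈ Set.uIcc a b, g t = g a + ∫ s in a..t, g' s) :
    ∫ t in a..b, f t * g' t = f b * g b - f a * g a - ∫ t in a..b, f' t * g t := by
  have ac : ∀ {h : ℝ → ℝ} (c : ℝ), IntervalIntegrable h volume a b →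
      AbsolutelyContinuousOnInterval (fun t => c + ∫ s in a..t, h s) a b := fun c hh =>
    (LipschitzOnWith.absolutelyContinuousOnInterval
      (LipschitzWith.const c).lipschitzOnWith).fun_add
      (hh.absolutelyContinuousOnInterval_intervalIntegral Set.left_mem_uIcc)
  have parts := (ac (f a) hf').integral_mul_deriv_eq_deriv_mul (ac (g a) hg')
  have hleft : ∫ t in a..b, f t * g' t =
      ∫ t in a..b, (f a + ∫ s in a..t, f' s) * deriv (fun t => g a + ∫ s in a..t, g' s) t := by
    apply intervalIntegral.integral_congr_ae
    filter_upwards [hg'.ae_hasDerivAt_integral] with t ht htm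
    have htm := Set.uIoc_subset_uIcc htm
    rw [((ht htm a Set.left_mem_uIcc).const_add (g a)).deriv, hf t htm]
  have hright : ∫ t in a..b, f' t * g t =
      ∫ t in a..b, deriv (fun t => f a + ∫ s in a..t, f' s) t * (g a + ∫ s in a..t, g' s) := by
    apply intervalIntegral.integral_congr_ae
    filter_upwards [hf'.ae_hasDerivAt_integral] with t ht htm
    have htm := Set.uIoc_subset_uIcc htm
    rw [((ht htm a Set.left_mem_uIcc).const_add (f a)).deriv, hg t htm]
  rw [hleft, hright, parts, ← hf b Set.right_mem_uIcc, ← hg b Set.right_mem_uIcc]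
  simp

/-- The sawtooth `t ↦ X t - X (⌊t⌋ + 1) + c` is interval integrable on `[0, N]`. -/
theorem intervalIntegrable_sawtooth {X : ℝ → ℝ} (hX : Continuous X) (c : ℝ) (N : ℕ) :
    IntervalIntegrable (fun t => X t - X ((⌊t⌋ : ℝ) + 1) + c) volume 0 N := by
  have key : ∀ k < N, IntervalIntegrable (fun t => X t - X ((⌊t⌋ : ℝ) + 1) + c) volume
      ((k : ℕ) : ℝ) ((k + 1 : ℕ) : ℝ) := by
    intro k _
    have hc : Continuous fun t => X t - X ((k : ℝ) + 1) + c := by fun_prop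
    refine (hc.intervalIntegrable _ _).congr_uIoo fun t ht => ?_
    rw [Set.uIoo_of_le (by simp)] at ht
    have hfloor : ⌊t⌋ = (k : ℤ) := Int.floor_eq_iff.2 ⟨by simpa using ht.1.le, by simpa using ht.2⟩
    simp [hfloor]
  simpa using IntervalIntegrable.trans_iterate key

/-- The Euler–Maclaurin formula of order one for a Riemann–Stieltjes sum: the integrand `Y` is a
primitive of `Y' X'` and the remainder is the integral against the backward sawtooth. -/
theorem sum_mul_sub_eq_integral_add_sawtooth {X Y Y' : ℝ → ℝ} (N : ℕ) (c : ℝ)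
    (hX : ContDiff ℝ 1 X) (hY' : ContinuousOn Y' (Set.Icc 0 (N : ℝ)))
    (hYc : ContinuousOn Y (Set.Icc 0 (N : ℝ)))
    (hY : ∀ t ∈ Set.Icc (0 : ℝ) N, Y t = Y 0 + ∫ s in (0 : ℝ)..t, Y' s * deriv X s) :
    ∑ k ∈ Finset.range N, Y (k : ℝ) * (X ((k : ℝ) + 1) - X (k : ℝ)) =
      (∫ t in (0 : ℝ)..N, Y t * deriv X t) - c * (Y N - Y 0) +
      ∫ t in (0 : ℝ)..N, Y' t * (X t - X ((⌊t⌋ : ℝ) + 1) + c) * deriv X t := by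
  have hX' : Continuous (deriv X) := hX.continuous_deriv_one
  have hN0 : (0 : ℝ) ≤ N := N.cast_nonneg
  have sub : ∀ {a b : ℝ}, 0 ≤ a → a ≤ b → b ≤ N → Set.uIcc a b ⊆ Set.Icc 0 (N : ℝ) := by
    intro a b ha hab hb
    rw [Set.uIcc_of_le hab]
    exact Set.Icc_subset_Icc ha hb
  have int : ∀ {h : ℝ → ℝ}, ContinuousOn h (Set.Icc 0 (N : ℝ)) → ∀ {a b : ℝ}, 0 ≤ a → a ≤ b →
      b ≤ N → IntervalIntegrable (fun t => h t * deriv X t) volume a b := fun hh _ _ ha hab hb =>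
    ((hh.mul hX'.continuousOn).mono (sub ha hab hb)).intervalIntegrable
  have intZ : IntervalIntegrable (fun t => Y' t * (X t - X ((⌊t⌋ : ℝ) + 1) + c) * deriv X t)
      volume 0 N :=
    ((intervalIntegrable_sawtooth hX.continuous c N).continuousOn_mul
      (by rwa [Set.uIcc_of_le hN0])).mul_continuousOn hX'.continuousOn
  have step : ∀ k ∈ Finset.range N, Y (k : ℝ) * (X ((k : ℝ) + 1) - X (k : ℝ)) =
      (∫ t in ((k : ℕ) : ℝ)..((k + 1 : ℕ) : ℝ), Y t * deriv X t)
      - c * (Y ((k + 1 : ℕ) : ℝ) - Y (k : ℝ)) +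
      ∫ t in ((k : ℕ) : ℝ)..((k + 1 : ℕ) : ℝ),
        Y' t * (X t - X ((⌊t⌋ : ℝ) + 1) + c) * deriv X t := by
    intro k hk
    have hkN : ((k + 1 : ℕ) : ℝ) ≤ N := by exact_mod_cast Finset.mem_range.1 hk
    have hk0 : (0 : ℝ) ≤ k := k.cast_nonneg
    have hkk : (k : ℝ) ≤ ((k + 1 : ℕ) : ℝ) := by simp
    have parts := integral_mul_eq_sub_of_eq_primitive_s9
      (f := Y) (g := fun t => X t - X ((k : ℝ) + 1) + c)
      (int hY' hk0 hkk hkN) (hX'.intervalIntegrable (k : ℝ) ((k + 1 : ℕ) : ℝ))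
      (by
        intro t ht
        rw [Set.uIcc_of_le hkk] at ht
        rw [hY t ⟨hk0.trans ht.1, ht.2.trans hkN⟩, hY k ⟨hk0, hkk.trans hkN⟩, add_assoc,
          intervalIntegral.integral_add_adjacent_intervals
            (int hY' le_rfl hk0 (hkk.trans hkN)) (int hY' hk0 ht.1 (ht.2.trans hkN))])
      (by
        intro t _
        rw [intervalIntegral.integral_deriv_eq_sub
          (fun s _ => (hX.differentiable one_ne_zero).differentiableAt)
          (hX'.intervalIntegrable _ _)]
        ring)
    have hcongr : ∫ t in ((k : ℕ) : ℝ)..((k + 1 : ℕ) : ℝ),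
        Y' t * (X t - X ((⌊t⌋ : ℝ) + 1) + c) * deriv X t =
        ∫ t in ((k : ℕ) : ℝ)..((k + 1 : ℕ) : ℝ),
          Y' t * deriv X t * (X t - X ((k : ℝ) + 1) + c) := by
      refine intervalIntegral.integral_congr_Ioo_of_le hkk fun t ht => ?_
      have hfloor : ⌊t⌋ = (k : ℤ) :=
        Int.floor_eq_iff.2 ⟨by simpa using ht.1.le, by simpa using ht.2⟩
      simp only [hfloor, Int.cast_natCast]
      ring
    rw [hcongr, parts]
    push_cast
    ring
  rw [Finset.sum_congr rfl step, Finset.sum_add_distrib, Finset.sum_sub_distrib, ← Finset.mul_sum,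
    Finset.sum_range_sub (fun k : ℕ => Y (k : ℝ)),
    intervalIntegral.sum_integral_adjacent_intervals (a := fun k : ℕ => (k : ℝ)),
    intervalIntegral.sum_integral_adjacent_intervals (a := fun k : ℕ => (k : ℝ))]
  · simp
  · intro k hk
    refine intZ.mono_set ?_
    rw [Set.uIcc_of_le hN0]
    exact sub k.cast_nonneg (by simp) (by exact_mod_cast hk)
  · intro k hk
    exact int hYc k.cast_nonneg (by simp) (by exact_mod_cast hk)

/-- Backward preliminary Euler–Maclaurin formula for Riemann–Stieltjes sums of a
controlled integrand `Y` along a one-dimensional path `X`, with backward sawtooth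
functions `Z⁻_l` built from initial data `b`. -/
theorem backward_preliminary_euler_maclaurin (N m : ℕ) (hN : 1 ≤ N) (hm : 2 ≤ m)
    (X : ℝ → ℝ) (hX : ContDiff ℝ 1 X)
    (hX0 : ∀ u : ℝ, u ≤ 0 → X u = X 0)
    (hXN : ∀ u : ℝ, (N : ℝ) ≤ u → X u = X (N : ℝ))
    (b : ℕ → ℝ) (hb0 : b 0 = 1)
    (Z : ℕ → ℝ → ℝ)
    (hZ1 : ∀ t : ℝ, Z 1 t = X t - X ((⌊t⌋ : ℝ) + 1) + b 1)
    (hZrec : ∀ l, 2 ≤ l → ∀ t : ℝ,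
      Z l t = b l + ∫ s in (0:ℝ)..t, deriv X s * Z (l - 1) s)
    (Y : ℕ → ℝ → ℝ)
    (hYcont : ∀ k, k ≤ m → ContinuousOn (Y k) (Set.Icc 0 (N : ℝ)))
    (hYctrl : ∀ k, k ≤ m - 1 → ∀ t ∈ Set.Icc (0:ℝ) (N:ℝ),
      Y k t = Y k 0 + ∫ s in (0:ℝ)..t, Y (k + 1) s * deriv X s) :
    ∑ k ∈ Finset.range N, Y 0 (k : ℝ) * (X ((k : ℝ) + 1) - X (k : ℝ)) =
      (∫ t in (0:ℝ)..(N:ℝ), Y 0 t * deriv X t)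
      - b 1 * (Y 0 (N : ℝ) - Y 0 0)
      + (∑ l ∈ Finset.Icc 2 m,
          (-1 : ℝ) ^ l * (Y (l - 1) (N : ℝ) * Z l (N : ℝ) - Y (l - 1) 0 * Z l 0))
      + (-1 : ℝ) ^ (m + 1) * ∫ t in (0:ℝ)..(N:ℝ), Y m t * Z m t * deriv X t := by
  have hX' : Continuous (deriv X) := hX.continuous_deriv_one
  have hIcc : Set.uIcc (0 : ℝ) N = Set.Icc 0 (N : ℝ) := Set.uIcc_of_le N.cast_nonneg
  have intZ : ∀ l, 1 ≤ l → IntervalIntegrable (Z l) volume 0 N := by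
    intro l hl
    induction l, hl using Nat.le_induction with
    | base => simpa only [← hZ1] using intervalIntegrable_sawtooth hX.continuous (b 1) N
    | succ l hl ih =>
      have hcont : ContinuousOn (Z (l + 1)) (Set.uIcc 0 (N : ℝ)) := by
        rw [funext (hZrec (l + 1) (by lia))]
        exact continuousOn_const.add
          ((ih.continuousOn_mul hX'.continuousOn).absolutelyContinuousOnInterval_intervalIntegral
            Set.left_mem_uIcc).continuousOn
      exact hcont.intervalIntegrable
  have parts : ∀ l, 1 ≤ l → l + 1 ≤ m →
      ∫ t in (0 : ℝ)..N, Y l t * Z l t * deriv X t =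
        Y l N * Z (l + 1) N - Y l 0 * Z (l + 1) 0
        - ∫ t in (0 : ℝ)..N, Y (l + 1) t * Z (l + 1) t * deriv X t := by
    intro l hl hlm
    have key := integral_mul_eq_sub_of_eq_primitive_s9 (f := Y l) (g := Z (l + 1))
      (a := 0) (b := N) (f' := fun s => Y (l + 1) s * deriv X s) (g' := fun s => deriv X s * Z l s)
      (ContinuousOn.intervalIntegrable
        ((hIcc ▸ hYcont (l + 1) hlm).mul hX'.continuousOn))
      ((intZ l hl).continuousOn_mul hX'.continuousOn)
      (fun t ht => hYctrl l (by lia) t (hIcc ▸ ht))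
      (fun t _ => by
        rw [hZrec (l + 1) (by lia) t, hZrec (l + 1) (by lia) 0]
        simp)
    simpa only [mul_assoc, mul_left_comm, mul_comm] using key
  have main : ∀ n, 1 ≤ n → n ≤ m →
      ∑ k ∈ Finset.range N, Y 0 (k : ℝ) * (X ((k : ℝ) + 1) - X (k : ℝ)) =
      (∫ t in (0:ℝ)..(N:ℝ), Y 0 t * deriv X t)
      - b 1 * (Y 0 (N : ℝ) - Y 0 0)
      + (∑ l ∈ Finset.Icc 2 n,
          (-1 : ℝ) ^ l * (Y (l - 1) (N : ℝ) * Z l (N : ℝ) - Y (l - 1) 0 * Z l 0))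
      + (-1 : ℝ) ^ (n + 1) * ∫ t in (0:ℝ)..(N:ℝ), Y n t * Z n t * deriv X t := by
    intro n hn
    induction n, hn using Nat.le_induction with
    | base =>
      intro _
      have h := sum_mul_sub_eq_integral_add_sawtooth N (b 1) hX (hYcont 1 (by lia))
        (hYcont 0 (by lia)) (hYctrl 0 (by lia))
      simp only [← hZ1] at h
      simpa using h
    | succ n hn ih =>
      intro hnm
      rw [ih (by lia), parts n hn hnm, Finset.sum_Icc_succ_top (by lia), Nat.add_sub_cancel]
      ring
  exact main m (by lia) le_rfl
end

section
/- Let x_0,…,x_N ∈ ℝ, let 0 ≤ m ≤ N and n ≥ 1 be integers. Then (x_m − x_0)^n/n! = Σ_{I composition of n, I = (I_1,…,I_k)} (1/I!)·Σ_{0 ≤ l_1 < l_2 < ⋯ < l_k < m} ∏_{r=1}^{k} (x_{l_r+1} − x_{l_r})^{I_r}. -/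
open scoped Nat

theorem Composition.sum_zero {M : Type*} [AddCommMonoid M] (F : List ℕ → M) :
    ∑ c : Composition 0, F c.blocks = F [] := by
  have h : ∀ c : Composition 0, c.blocks = [] := fun c => c.blocks_eq_nil.2 rfl
  simp [h, composition_card]

/-- Splitting compositions of `n + 1` according to their first block. -/
theorem Composition.sum_succ_eq_sum_antidiagonal {M : Type*} [AddCommMonoid M] (n : ℕ)
    (F : List ℕ → M) :
    ∑ c : Composition (n + 1), F c.blocks =
      ∑ p ∈ Finset.HasAntidiagonal.antidiagonal n,
        ∑ c : Composition p.2, F ((p.1 + 1) :: c.blocks) := by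
  rw [Finset.sum_sigma']
  symm
  refine Finset.sum_bij
    (fun q hq => (⟨(q.1.1 + 1) :: q.2.blocks, ?_, ?_⟩ : Composition (n + 1))) ?_ ?_ ?_ ?_
  · intro i hi
    rcases List.mem_cons.1 hi with rfl | hi
    · omega
    · exact q.2.blocks_pos hi
  · have := Finset.HasAntidiagonal.mem_antidiagonal.1 (Finset.mem_sigma.1 hq).1
    rw [List.sum_cons, q.2.blocks_sum]
    omega
  · intros
    exact Finset.mem_univ _
  · rintro ⟨⟨i, j⟩, c⟩ _ ⟨⟨i', j'⟩, c'⟩ _ h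
    have h' := congrArg Composition.blocks h
    simp only [List.cons.injEq, add_left_inj] at h'
    obtain ⟨rfl, hc⟩ := h'
    obtain rfl : j = j' := by
      have := congrArg List.sum hc
      rwa [c.blocks_sum, c'.blocks_sum] at this
    obtain rfl : c = c' := Composition.ext hc
    rfl
  · rintro ⟨blocks, hpos, hsum⟩ _
    cases blocks with
    | nil => simp at hsum
    | cons b L =>
      have hb : 0 < b := hpos List.mem_cons_self
      rw [List.sum_cons] at hsum
      refine ⟨⟨(b - 1, L.sum), ⟨L, fun h => hpos (List.mem_cons_of_mem _ h), rfl⟩⟩, ?_, ?_⟩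
      · simp only [Finset.mem_sigma, Finset.HasAntidiagonal.mem_antidiagonal,
          Finset.mem_univ, and_true]
        omega
      · ext1
        simp only [Nat.sub_add_cancel hb]
  · intros
    rfl

/-- A strictly monotone map `Fin (k + 1) → Fin (m + 1)` either avoids `0`, or takes the value `0`
exactly at `0`. -/
theorem Fin.filter_strictMono_succ_succ (k m : ℕ) :
    Finset.univ.filter (fun l : Fin (k + 1) → Fin (m + 1) => StrictMono l) =
      (Finset.univ.filter (fun l : Fin (k + 1) → Fin m => StrictMono l)).image
          (fun l r => (l r).succ) ∪
        (Finset.univ.filter (fun l : Fin k → Fin m => StrictMono l)).image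
          (fun l => Fin.cons 0 fun r => (l r).succ) := by
  ext l
  simp only [Finset.mem_filter_univ, Finset.mem_union, Finset.mem_image]
  constructor
  · intro hl
    by_cases h0 : l 0 = 0
    · right
      have hne : ∀ r : Fin k, l r.succ ≠ 0 := fun r =>
        (h0 ▸ hl (Fin.succ_pos r) : 0 < l r.succ).ne'
      refine ⟨fun r => (l r.succ).pred (hne r), fun r s hrs => ?_, ?_⟩
      · exact Fin.pred_lt_pred_iff.2 (hl (Fin.succ_lt_succ_iff.2 hrs))
      · funext r
        cases r using Fin.cases <;> simp [h0]
    · left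
      have hne : ∀ r, l r ≠ 0 := fun r =>
        ((Fin.pos_iff_ne_zero.2 h0).trans_le (hl.monotone (Fin.zero_le r))).ne'
      exact ⟨fun r => (l r).pred (hne r), fun r s hrs => Fin.pred_lt_pred_iff.2 (hl hrs),
        by simp⟩
  · rintro (⟨l', hl', rfl⟩ | ⟨l', hl', rfl⟩)
    · exact fun r s hrs => Fin.succ_lt_succ_iff.2 (hl' hrs)
    · intro r s hrs
      cases s using Fin.cases with
      | zero => exact absurd hrs (Fin.not_lt_zero r)
      | succ s =>
        cases r using Fin.cases with
        | zero => simp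
        | succ r => simpa using hl' (Fin.succ_lt_succ_iff.1 hrs)

/-- Recursion for iterated sums, separating the terms in which the index `0` occurs. -/
theorem Fin.sum_strictMono_prod_succ_succ {R : Type*} [CommSemiring R] (k m : ℕ)
    (b : Fin (k + 1) → ℕ → R) :
    ∑ l ∈ Finset.univ.filter (fun l : Fin (k + 1) → Fin (m + 1) => StrictMono l),
        ∏ r, b r (l r) =
      ∑ l ∈ Finset.univ.filter (fun l : Fin (k + 1) → Fin m => StrictMono l),
          ∏ r, b r (l r + 1) +
        b 0 0 * ∑ l ∈ Finset.univ.filter (fun l : Fin k → Fin m => StrictMono l),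
          ∏ r : Fin k, b r.succ (l r + 1) := by
  rw [Fin.filter_strictMono_succ_succ, Finset.sum_union, Finset.sum_image, Finset.sum_image,
    Finset.mul_sum]
  · simp [Fin.prod_univ_succ]
  · intro l _ l' _ h
    funext r
    simpa using congrFun h r.succ
  · intro l _ l' _ h
    funext r
    simpa using congrFun h r
  · rw [Finset.disjoint_left]
    simp only [Finset.mem_image]
    rintro _ ⟨l, _, rfl⟩ ⟨l', _, h⟩
    exact Fin.succ_ne_zero _ (congrFun h 0).symm

/-- The iterated sum of `a` over strictly increasing indices below `m` with exponents `L`,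
divided by the factorials of the exponents. -/
noncomputable def iteratedSum {K : Type*} [Field K] (a : ℕ → K) (m : ℕ) (L : List ℕ) : K :=
  (1 / ∏ r : Fin L.length, ((L.get r)! : K)) *
    ∑ l ∈ Finset.univ.filter (fun l : Fin L.length → Fin m => StrictMono l),
      ∏ r : Fin L.length, a (l r) ^ L.get r

section iteratedSum

variable {K : Type*} [Field K]

theorem iteratedSum_nil (a : ℕ → K) (m : ℕ) : iteratedSum a m [] = 1 := by
  have h : ∀ l : Fin ([] : List ℕ).length → Fin m, StrictMono l := fun l r => r.elim0
  simp [iteratedSum, h]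

theorem iteratedSum_zero_cons (a : ℕ → K) (i : ℕ) (L : List ℕ) :
    iteratedSum a 0 (i :: L) = 0 := by
  rw [iteratedSum, Finset.sum_eq_zero, mul_zero]
  exact fun l _ => (l ⟨0, Nat.succ_pos _⟩).elim0

theorem iteratedSum_succ_cons (a : ℕ → K) (m i : ℕ) (L : List ℕ) :
    iteratedSum a (m + 1) (i :: L) =
      iteratedSum (fun j => a (j + 1)) m (i :: L) +
        a 0 ^ i / (i ! : K) * iteratedSum (fun j => a (j + 1)) m L := by
  have h := Fin.sum_strictMono_prod_succ_succ L.length m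
    (fun r j => a j ^ (i :: L).get r)
  have hp : ∏ r : Fin (i :: L).length, (((i :: L).get r)! : K) =
      (i ! : K) * ∏ r : Fin L.length, ((L.get r)! : K) :=
    Fin.prod_univ_succ (n := L.length) _
  unfold iteratedSum
  refine (congrArg _ h).trans ?_
  rw [mul_add, hp]
  congr 1
  change _ * (a 0 ^ i * ∑ l ∈ Finset.univ.filter (fun l : Fin L.length → Fin m => StrictMono l),
    ∏ r : Fin L.length, a (l r + 1) ^ L.get r) = _
  rw [one_div, one_div, mul_inv]
  ring

/-- The normalized binomial theorem, with the leading term separated. -/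
theorem add_pow_succ_div_factorial [CharZero K] (u v : K) (n : ℕ) :
    (u + v) ^ (n + 1) / ((n + 1)! : K) =
      v ^ (n + 1) / ((n + 1)! : K) +
        ∑ p ∈ Finset.HasAntidiagonal.antidiagonal n,
          u ^ (p.1 + 1) / ((p.1 + 1)! : K) * (v ^ p.2 / (p.2 ! : K)) := by
  have h : (u + v) ^ (n + 1) / ((n + 1)! : K) =
      ∑ p ∈ Finset.HasAntidiagonal.antidiagonal (n + 1),
        u ^ p.1 / (p.1 ! : K) * (v ^ p.2 / (p.2 ! : K)) := by
    rw [(Commute.all u v).add_pow', Finset.sum_div]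
    refine Finset.sum_congr rfl fun p hp => ?_
    have hp' := Finset.HasAntidiagonal.mem_antidiagonal.1 hp
    have hf : ((n + 1).choose p.1 : K) * (p.1 ! : K) * (p.2 ! : K) = ((n + 1)! : K) := by
      rw [← hp', Nat.choose_symm_add]
      exact_mod_cast Nat.add_choose_mul_factorial_mul_factorial p.1 p.2
    have h1 : (p.1 ! : K) ≠ 0 := Nat.cast_ne_zero.2 (Nat.factorial_ne_zero _)
    have h2 : (p.2 ! : K) ≠ 0 := Nat.cast_ne_zero.2 (Nat.factorial_ne_zero _)
    have h3 : ((n + 1)! : K) ≠ 0 := Nat.cast_ne_zero.2 (Nat.factorial_ne_zero _)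
    rw [nsmul_eq_mul, div_mul_div_comm, div_eq_div_iff h3 (mul_ne_zero h1 h2), ← hf]
    ring
  rw [h, Finset.Nat.sum_antidiagonal_succ]
  simp

theorem sum_pow_div_factorial_eq_sum_iteratedSum [CharZero K] (m : ℕ) (a : ℕ → K) (n : ℕ) :
    (∑ j ∈ Finset.range m, a j) ^ n / (n ! : K) =
      ∑ c : Composition n, iteratedSum a m c.blocks := by
  induction m generalizing a n with
  | zero =>
    cases n with
    | zero => simp [iteratedSum_nil, Composition.sum_zero]
    | succ n =>
      rw [Composition.sum_succ_eq_sum_antidiagonal n (iteratedSum a 0)]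
      simp [iteratedSum_zero_cons]
  | succ m ih =>
    cases n with
    | zero => simp [iteratedSum_nil, Composition.sum_zero]
    | succ n =>
      rw [Composition.sum_succ_eq_sum_antidiagonal n (iteratedSum a (m + 1)),
        Finset.sum_range_succ', add_comm, add_pow_succ_div_factorial, ih,
        Composition.sum_succ_eq_sum_antidiagonal n (iteratedSum _ m), ← Finset.sum_add_distrib]
      refine Finset.sum_congr rfl fun p _ => ?_
      rw [ih, Finset.mul_sum, ← Finset.sum_add_distrib]
      exact Finset.sum_congr rfl fun c _ => (iteratedSum_succ_cons a m _ _).symm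

end iteratedSum

/-- One-dimensional case: the `n`-th power of an increment of a time series, divided by `n!`,
equals the Hoffman-type composition sum of iterated sums. -/
theorem pow_increment_eq_composition_sum (N : ℕ) (x : ℕ → ℝ)
    (m : ℕ) (hm : m ≤ N) (n : ℕ) (hn : 1 ≤ n) :
    (x m - x 0) ^ n / (n ! : ℝ) =
      ∑ c : Composition n,
        (1 / ∏ r : Fin c.length, ((c.blocksFun r)! : ℝ)) *
          ∑ l ∈ Finset.univ.filter (fun l : Fin c.length → Fin m => StrictMono l),
            ∏ r : Fin c.length, (x ((l r : ℕ) + 1) - x (l r : ℕ)) ^ (c.blocksFun r) := by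
  rw [← Finset.sum_range_sub x m]
  exact sum_pow_div_factorial_eq_sum_iteratedSum m (fun j => x (j + 1) - x j) n
end

section
/- Let x_0,…,x_N ∈ ℝ^d, let X : [0,N] → ℝ^d be the piecewise linear interpolation of x, and let Z denote the backward sawtooth signature coefficients of X with unit initial datum. Then for every t ∈ [0,N), every n ≥ 2 and every word (j_1,…,j_n): ⟨Z_t,(j_1,…,j_n)⟩ = ((t−⌊t⌋)^n/n! − (t−⌊t⌋)^{n−1}/(n−1)!)·∏_{s=1}^{n} Δx_{⌊t⌋}^{j_s} + Σ_{i=0}^{n−2} ((t−⌊t⌋)^i/i!)·(∏_{s=1}^{i} Δx_{⌊t⌋}^{j_s})·Σ over compositions I = (I_1,…,I_k) of n−i with I_1 ≥ 2 of (1/I! − 1/((I_1−1)!·I_2!⋯I_k!))·Σ_{0 ≤ l_1 < ⋯ < l_k < ⌊t⌋} ∏_{r=1}^{k} ∏_{p ∈ B_r} Δx_{l_r}^{j_{n+1−p}}, where B_1,…,B_k are the consecutive blocks of {1,…,n−i} determined by I (applied to the reversed suffix word (j_n, j_{n−1},…,j_{i+1})). -/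
open scoped Nat
open MeasureTheory

/-- The sum of `∏ r, g r (l r)` over all strictly increasing `l : Fin m → Fin k`. -/
noncomputable def strictMonoSum (m k : ℕ) (g : Fin m → ℕ → ℝ) : ℝ :=
  ∑ l ∈ Finset.univ.filter (fun l : Fin m → Fin k => StrictMono l), ∏ r, g r (l r)

lemma strictMonoSum_zero_right {m : ℕ} (hm : 0 < m) (g : Fin m → ℕ → ℝ) :
    strictMonoSum m 0 g = 0 := by
  have : IsEmpty (Fin m → Fin 0) := ⟨fun l => (l ⟨0, hm⟩).elim0⟩
  simp [strictMonoSum, Finset.univ_eq_empty]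

lemma strictMonoSum_succ_succ (m k : ℕ) (g : Fin (m + 1) → ℕ → ℝ) :
    strictMonoSum (m + 1) (k + 1) g =
      strictMonoSum (m + 1) k g
        + strictMonoSum m k (fun r => g r.castSucc) * g (Fin.last m) k := by
  unfold strictMonoSum
  rw [← Finset.sum_filter_not_add_sum_filter _
    (fun l : Fin (m + 1) → Fin (k + 1) => l (Fin.last m) = Fin.last k)]
  congr 1
  · symm
    refine Finset.sum_bij (fun l _ r => (l r).castSucc) ?_ ?_ ?_ ?_
    · intro l hl
      simp only [Finset.mem_filter, Finset.mem_univ, true_and] at hl ⊢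
      exact ⟨fun a b hab => Fin.castSucc_lt_castSucc_iff.2 (hl hab), Fin.castSucc_ne_last _⟩
    · intro l _ l' _ h
      funext r
      exact Fin.castSucc_injective _ (congrFun h r)
    · intro l hl
      simp only [Finset.mem_filter, Finset.mem_univ, true_and] at hl
      have hlt : ∀ r, (l r : ℕ) < k := fun r => by
        have h1 : l r ≤ l (Fin.last m) := hl.1.monotone (Fin.le_last r)
        have h2 : l (Fin.last m) < Fin.last k := Fin.lt_last_iff_ne_last.2 hl.2
        exact lt_of_le_of_lt h1 h2
      refine ⟨fun r => ⟨l r, hlt r⟩, ?_, ?_⟩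
      · simp only [Finset.mem_filter, Finset.mem_univ, true_and]
        exact fun a b hab => hl.1 hab
      · rfl
    · intro l _
      rfl
  · rw [Finset.sum_mul]
    symm
    refine Finset.sum_bij
      (fun l _ => Fin.snoc (α := fun _ => Fin (k + 1)) (fun r => (l r).castSucc) (Fin.last k))
      ?_ ?_ ?_ ?_
    · intro l hl
      simp only [Finset.mem_filter, Finset.mem_univ, true_and] at hl ⊢
      refine ⟨fun a b hab => ?_, by simp⟩
      induction a using Fin.lastCases with
      | last => exact absurd hab (not_lt.2 (Fin.le_last b))
      | cast a =>
        induction b using Fin.lastCases with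
        | last => simp
        | cast b => simpa using hl (Fin.castSucc_lt_castSucc_iff.1 hab)
    · intro l _ l' _ h
      funext r
      have := congrFun h r.castSucc
      simpa using this
    · intro l hl
      simp only [Finset.mem_filter, Finset.mem_univ, true_and] at hl
      have hlt : ∀ r : Fin m, (l r.castSucc : ℕ) < k := fun r => by
        have h1 : l r.castSucc < l (Fin.last m) := hl.1 (Fin.castSucc_lt_last r)
        rw [hl.2] at h1
        exact h1
      refine ⟨fun r => ⟨l r.castSucc, hlt r⟩, ?_, ?_⟩
      · simp only [Finset.mem_filter, Finset.mem_univ, true_and]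
        exact fun a b hab => hl.1 (Fin.castSucc_lt_castSucc_iff.2 hab)
      · funext r
        induction r using Fin.lastCases with
        | last => simp [hl.2]
        | cast r => simp
    · intro l _
      rw [Fin.prod_univ_castSucc]
      simp

/-- The iterated sum over increasing indices `l` of the block products `∏ r, ∏ p ∈ B_r, a (l r) p`,
where the consecutive blocks `B_r` have the sizes listed in `b`. -/
noncomputable def blockSum (a : ℕ → ℕ → ℝ) (b : List ℕ) (k : ℕ) : ℝ :=
  strictMonoSum b.length k
    (fun r l => ∏ q ∈ Finset.range (b.get r), a l ((b.take r).sum + q))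

lemma blockSum_zero_right (a : ℕ → ℕ → ℝ) {b : List ℕ} (hb : b ≠ []) : blockSum a b 0 = 0 :=
  strictMonoSum_zero_right (List.length_pos_iff.2 hb) _

lemma blockSum_nil (a : ℕ → ℕ → ℝ) (k : ℕ) : blockSum a [] k = 1 := by
  have : (Finset.univ.filter (fun l : Fin 0 → Fin k => StrictMono l)) = Finset.univ :=
    Finset.filter_true_of_mem fun l _ i => i.elim0
  simp only [blockSum, strictMonoSum, List.length_nil, this]
  simp

lemma strictMonoSum_congr {m m' k : ℕ} (h : m = m') (g : Fin m → ℕ → ℝ) (g' : Fin m' → ℕ → ℝ)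
    (hg : ∀ r, g r = g' (Fin.cast h r)) : strictMonoSum m k g = strictMonoSum m' k g' := by
  subst h
  congr 1
  funext r
  exact hg r

lemma blockSum_concat_succ (a : ℕ → ℕ → ℝ) (b : List ℕ) (i k : ℕ) :
    blockSum a (b ++ [i]) (k + 1) =
      blockSum a (b ++ [i]) k
        + blockSum a b k * ∏ q ∈ Finset.range i, a k (b.sum + q) := by
  have hlen : (b ++ [i]).length = b.length + 1 := by simp
  have key : ∀ k, blockSum a (b ++ [i]) k = strictMonoSum (b.length + 1) k
      (fun r l => ∏ q ∈ Finset.range ((b ++ [i]).get (Fin.cast hlen.symm r)),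
        a l (((b ++ [i]).take r).sum + q)) := fun k =>
    strictMonoSum_congr hlen _ _ fun r => rfl
  rw [key, key, strictMonoSum_succ_succ]
  congr 2
  · refine strictMonoSum_congr rfl _ _ fun r => ?_
    funext l
    simp [List.take_append_of_le_length r.2.le]
  · simp

/-- The block-size lists of the compositions of `n` whose first block has size at least two. -/
def compositionLists (n : ℕ) : Finset (List ℕ) :=
  (Finset.univ.filter (fun c : Composition n => 2 ≤ c.blocks.headI)).image Composition.blocks

lemma mem_compositionLists {n : ℕ} {b : List ℕ} :
    b ∈ compositionLists n ↔ (∀ i ∈ b, 0 < i) ∧ b.sum = n ∧ 2 ≤ b.headI := by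
  simp only [compositionLists, Finset.mem_image, Finset.mem_filter, Finset.mem_univ, true_and]
  constructor
  · rintro ⟨c, hc, rfl⟩
    exact ⟨fun i hi => c.blocks_pos hi, c.blocks_sum, hc⟩
  · rintro ⟨h1, h2, h3⟩
    exact ⟨⟨b, fun hi => h1 _ hi, h2⟩, h3, rfl⟩

lemma ne_nil_of_mem_compositionLists {n : ℕ} {b : List ℕ} (hb : b ∈ compositionLists n) :
    b ≠ [] := by
  rintro rfl
  simp [mem_compositionLists] at hb

lemma sum_compositionLists (n : ℕ) (f : List ℕ → ℝ) :
    ∑ b ∈ compositionLists n, f b =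
      ∑ c ∈ Finset.univ.filter (fun c : Composition n => 2 ≤ c.blocks.headI), f c.blocks :=
  Finset.sum_image fun _ _ _ _ h => Composition.ext h

/-- Splitting off the last block of a composition. -/
lemma sum_compositionLists_eq_single_add {n : ℕ} (hn : 2 ≤ n) (f : List ℕ → ℝ) :
    ∑ b ∈ compositionLists n, f b =
      f [n] + ∑ i ∈ Finset.range (n - 2), ∑ b ∈ compositionLists (n - (i + 1)),
        f (b ++ [i + 1]) := by
  have hmem : [n] ∈ compositionLists n := by
    rw [mem_compositionLists]
    refine ⟨?_, ?_, ?_⟩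
    · intro i hi
      have : i = n := by simpa using hi
      omega
    · simp
    · simpa using hn
  rw [← Finset.add_sum_erase _ _ hmem, Finset.sum_sigma']
  congr 1
  symm
  refine Finset.sum_bij (fun p _ => p.2 ++ [p.1 + 1]) ?_ ?_ ?_ ?_
  · rintro ⟨i, b⟩ hp
    simp only [Finset.mem_sigma, Finset.mem_range] at hp
    obtain ⟨hi, hb⟩ := hp
    have hne := ne_nil_of_mem_compositionLists hb
    rw [mem_compositionLists] at hb
    obtain ⟨h1, h2, h3⟩ := hb
    obtain ⟨c, b, rfl⟩ := List.exists_cons_of_ne_nil hne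
    rw [Finset.mem_erase, mem_compositionLists]
    refine ⟨by simp, ?_, ?_, by simpa using h3⟩
    · intro j hj
      rw [List.mem_append, List.mem_singleton] at hj
      rcases hj with hj | rfl
      · exact h1 j hj
      · omega
    · rw [List.sum_append, h2]
      simp only [List.sum_singleton]
      omega
  · rintro ⟨i, b⟩ _ ⟨i', b'⟩ _ h
    obtain ⟨h1, h2⟩ := List.append_inj' h rfl
    simp only [List.cons.injEq, add_left_inj, and_true] at h2
    subst h1 h2
    rfl
  · intro b hb
    rw [Finset.mem_erase] at hb
    obtain ⟨hbn, hb⟩ := hb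
    have hne := ne_nil_of_mem_compositionLists hb
    rw [mem_compositionLists] at hb
    obtain ⟨h1, h2, h3⟩ := hb
    obtain ⟨c, i, rfl⟩ : ∃ c i, b = c ++ [i] :=
      ⟨_, _, (List.dropLast_append_getLast hne).symm⟩
    have hi : 0 < i := h1 i (by simp)
    rw [List.sum_append, List.sum_singleton] at h2
    have hc : c ≠ [] := by
      rintro rfl
      apply hbn
      simpa using h2
    obtain ⟨e, c, rfl⟩ := List.exists_cons_of_ne_nil hc
    have he : 2 ≤ e := by simpa using h3
    rw [List.sum_cons] at h2
    refine ⟨⟨i - 1, e :: c⟩, ?_, ?_⟩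
    · rw [Finset.mem_sigma, Finset.mem_range, mem_compositionLists]
      refine ⟨by dsimp only; omega, fun j hj => h1 j ?_, ?_, by simpa using he⟩
      · exact List.mem_append_left _ hj
      · rw [List.sum_cons]
        dsimp only
        omega
    · dsimp only
      rw [Nat.sub_add_cancel hi]
  · rintro ⟨i, b⟩ _
    rfl

/-- The coefficient `1 / I! - 1 / ((I_1 - 1)! I_2! ⋯ I_k!)` of a composition `I`. -/
noncomputable def sawtoothCoeff (b : List ℕ) : ℝ :=
  1 / ((b.map Nat.factorial).prod : ℝ)
    - 1 / ((((b.headI - 1)! * (b.tail.map Nat.factorial).prod : ℕ)) : ℝ)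

lemma sawtoothCoeff_concat {b : List ℕ} (hb : b ≠ []) (i : ℕ) :
    sawtoothCoeff (b ++ [i]) = sawtoothCoeff b / (i ! : ℝ) := by
  obtain ⟨c, b, rfl⟩ := List.exists_cons_of_ne_nil hb
  have h : (i ! : ℝ) ≠ 0 := by positivity
  simp only [sawtoothCoeff, List.cons_append, List.headI_cons, List.tail_cons, List.map_cons,
    List.map_append, List.map_nil, List.prod_cons, List.prod_append, List.prod_nil]
  push_cast
  simp only [mul_inv, div_eq_mul_inv]
  ring

/-- The weighted sum of block sums over compositions with first block at least two. -/
noncomputable def compositionSum (a : ℕ → ℕ → ℝ) (n k : ℕ) : ℝ :=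
  ∑ b ∈ compositionLists n, sawtoothCoeff b * blockSum a b k

/-- The value of the sawtooth signature coefficient of level `n` at time `k + u`, `u ∈ [0, 1]`,
where `a l p` is the increment over `[l, l + 1]` in the direction of the `p`-th letter counted
from the end. -/
noncomputable def sawtoothValue (a : ℕ → ℕ → ℝ) (n k : ℕ) (u : ℝ) : ℝ :=
  (u ^ n / (n ! : ℝ) - u ^ (n - 1) / ((n - 1)! : ℝ)) *
      (∏ s ∈ Finset.range n, a k (n - 1 - s))
    + ∑ i ∈ Finset.range (n - 1),
        (u ^ i / (i ! : ℝ)) * (∏ s ∈ Finset.range i, a k (n - 1 - s)) *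
          compositionSum a (n - i) k

lemma compositionSum_zero_right (a : ℕ → ℕ → ℝ) (n : ℕ) : compositionSum a n 0 = 0 :=
  Finset.sum_eq_zero fun b hb => by
    rw [blockSum_zero_right a (ne_nil_of_mem_compositionLists hb), mul_zero]

lemma compositionSum_succ_right (a : ℕ → ℕ → ℝ) {n : ℕ} (hn : 2 ≤ n) (k : ℕ) :
    compositionSum a n (k + 1) = sawtoothValue a n k 1 := by
  have hprod : ∀ m i, m + i = n →
      ∏ q ∈ Finset.range i, a k (m + q) = ∏ s ∈ Finset.range i, a k (n - 1 - s) := by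
    intro m i h
    rw [← Finset.prod_range_reflect]
    refine Finset.prod_congr rfl fun s hs => ?_
    rw [Finset.mem_range] at hs
    congr 1
    omega
  have hk : compositionSum a n k = sawtoothCoeff [n] * blockSum a [n] k
      + ∑ i ∈ Finset.range (n - 2), ∑ b ∈ compositionLists (n - (i + 1)),
          sawtoothCoeff (b ++ [i + 1]) * blockSum a (b ++ [i + 1]) k :=
    sum_compositionLists_eq_single_add hn _
  have hsingle : blockSum a [n] (k + 1) =
      blockSum a [n] k + ∏ s ∈ Finset.range n, a k (n - 1 - s) := by
    have := blockSum_concat_succ a [] n k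
    rw [List.nil_append, blockSum_nil, one_mul, List.sum_nil, hprod 0 n (zero_add n)] at this
    exact this
  have hcoeff : sawtoothCoeff [n] = 1 / (n ! : ℝ) - 1 / ((n - 1)! : ℝ) := by
    simp [sawtoothCoeff]
  obtain ⟨m, rfl⟩ : ∃ m, n = m + 2 := ⟨n - 2, by omega⟩
  rw [sawtoothValue, show m + 2 - 1 = m + 1 from rfl, Finset.sum_range_succ']
  simp only [Finset.range_zero, Finset.prod_empty, pow_zero, Nat.factorial_zero, Nat.cast_one,
    div_one, mul_one, one_mul, Nat.sub_zero, one_pow]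
  rw [hk, compositionSum, sum_compositionLists_eq_single_add hn, hsingle, hcoeff]
  have hstep : ∀ i ∈ Finset.range (m + 2 - 2),
      ∑ b ∈ compositionLists (m + 2 - (i + 1)),
          sawtoothCoeff (b ++ [i + 1]) * blockSum a (b ++ [i + 1]) (k + 1) =
        ∑ b ∈ compositionLists (m + 2 - (i + 1)),
          sawtoothCoeff (b ++ [i + 1]) * blockSum a (b ++ [i + 1]) k
        + 1 / ((i + 1)! : ℝ) * (∏ s ∈ Finset.range (i + 1), a k (m + 1 - s)) *
          compositionSum a (m + 2 - (i + 1)) k := by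
    intro i hi
    rw [Finset.mem_range] at hi
    rw [compositionSum, Finset.mul_sum, ← Finset.sum_add_distrib]
    refine Finset.sum_congr rfl fun b hb => ?_
    have hsum : b.sum = m + 2 - (i + 1) := (mem_compositionLists.1 hb).2.1
    rw [blockSum_concat_succ, hprod b.sum (i + 1) (by omega),
      sawtoothCoeff_concat (ne_nil_of_mem_compositionLists hb)]
    simp only [show m + 2 - 1 = m + 1 from rfl]
    ring
  rw [Finset.sum_congr rfl hstep, Finset.sum_add_distrib]
  simp only [show m + 2 - 1 = m + 1 from rfl, show m + 2 - 2 = m from rfl]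
  ring

lemma sawtoothValue_zero (a : ℕ → ℕ → ℝ) {n : ℕ} (hn : 2 ≤ n) (k : ℕ) :
    sawtoothValue a n k 0 = compositionSum a n k := by
  obtain ⟨m, rfl⟩ : ∃ m, n = m + 2 := ⟨n - 2, by omega⟩
  rw [sawtoothValue, show m + 2 - 1 = m + 1 from rfl, Finset.sum_range_succ']
  simp

lemma hasDerivAt_pow_succ_div_factorial (n : ℕ) (u : ℝ) :
    HasDerivAt (fun u : ℝ => u ^ (n + 1) / ((n + 1)! : ℝ)) (u ^ n / (n ! : ℝ)) u := by
  refine ((hasDerivAt_pow (n + 1) u).div_const ((n + 1)! : ℝ)).congr_deriv ?_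
  rw [Nat.factorial_succ]
  push_cast
  have h : (n ! : ℝ) ≠ 0 := by positivity
  have h' : (n : ℝ) + 1 ≠ 0 := by positivity
  field_simp

lemma hasDerivAt_sawtoothValue (a : ℕ → ℕ → ℝ) {n : ℕ} (hn : 1 ≤ n) (k : ℕ) (u : ℝ) :
    HasDerivAt (sawtoothValue a (n + 1) k) (a k n * sawtoothValue a n k u) u := by
  obtain ⟨m, rfl⟩ : ∃ m, n = m + 1 := ⟨n - 1, by omega⟩
  have hprod : ∀ i, ∏ s ∈ Finset.range (i + 1), a k (m + 1 - s) =
      a k (m + 1) * ∏ s ∈ Finset.range i, a k (m - s) := by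
    intro i
    rw [Finset.prod_range_succ', mul_comm]
    simp
  have hfun : sawtoothValue a (m + 1 + 1) k = fun u =>
      (u ^ (m + 1 + 1) / ((m + 1 + 1)! : ℝ) - u ^ (m + 1) / ((m + 1)! : ℝ)) *
        (a k (m + 1) * ∏ s ∈ Finset.range (m + 1), a k (m - s))
      + (∑ i ∈ Finset.range m, (u ^ (i + 1) / ((i + 1)! : ℝ)) *
          ((a k (m + 1) * ∏ s ∈ Finset.range i, a k (m - s)) *
            compositionSum a (m + 1 - i) k)
        + compositionSum a (m + 2) k) := by
    funext u
    rw [sawtoothValue, show m + 1 + 1 - 1 = m + 1 from rfl, Finset.sum_range_succ']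
    simp only [hprod, Nat.add_sub_add_right, mul_assoc]
    simp
  rw [hfun]
  have hd := (((hasDerivAt_pow_succ_div_factorial (m + 1) u).sub
    (hasDerivAt_pow_succ_div_factorial m u)).mul_const
      (a k (m + 1) * ∏ s ∈ Finset.range (m + 1), a k (m - s))).add
    ((HasDerivAt.fun_sum fun i (_ : i ∈ Finset.range m) =>
      (hasDerivAt_pow_succ_div_factorial i u).mul_const
        ((a k (m + 1) * ∏ s ∈ Finset.range i, a k (m - s)) *
          compositionSum a (m + 1 - i) k)).add_const (compositionSum a (m + 2) k))
  refine hd.congr_deriv ?_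
  rw [sawtoothValue, mul_add, Finset.mul_sum]
  simp only [Nat.add_sub_cancel]
  congr 1
  · ring
  · exact Finset.sum_congr rfl fun i _ => by ring

lemma continuous_sawtoothValue (a : ℕ → ℕ → ℝ) (n k : ℕ) :
    Continuous (sawtoothValue a n k) := by
  unfold sawtoothValue
  fun_prop

/-- On each unit interval the recursion integrates one sawtooth value to the next. -/
lemma intervalIntegral_eq_sawtoothValue_sub (a : ℕ → ℕ → ℝ) {n : ℕ} (hn : 1 ≤ n) (k : ℕ)
    {h : ℝ → ℝ} {u : ℝ} (hu : u ∈ Set.Icc (0 : ℝ) 1)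
    (hh : ∀ s ∈ Set.Ioo (0 : ℝ) 1, h (k + s) = a k n * sawtoothValue a n k s) :
    IntervalIntegrable h volume k (k + u) ∧
      ∫ s in (k : ℝ)..(k + u), h s
        = sawtoothValue a (n + 1) k u - compositionSum a (n + 1) k := by
  have hcont : Continuous fun s : ℝ => a k n * sawtoothValue a n k (s - k) :=
    continuous_const.mul ((continuous_sawtoothValue a n k).comp (continuous_id.sub continuous_const))
  have hae : ∀ᵐ s : ℝ, s ∈ Set.uIoc (k : ℝ) (k + u) →
      a k n * sawtoothValue a n k (s - k) = h s := by
    filter_upwards [compl_mem_ae_iff.2 (measure_singleton (μ := volume) ((k : ℝ) + 1))]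
      with s hs hmem
    rw [Set.uIoc_of_le (by linarith [hu.1])] at hmem
    have hne : s ≠ k + 1 := hs
    have hlt : s < k + 1 := lt_of_le_of_ne (by linarith [hmem.2, hu.2]) hne
    rw [← hh (s - k) ⟨by linarith [hmem.1], by linarith⟩, add_sub_cancel]
  refine ⟨(hcont.intervalIntegrable _ _).congr_ae
    ((ae_restrict_iff' measurableSet_uIoc).2 hae), ?_⟩
  rw [← intervalIntegral.integral_congr_ae hae,
    intervalIntegral.integral_comp_sub_right (fun s => a k n * sawtoothValue a n k s),
    sub_self, add_sub_cancel_left,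
    intervalIntegral.integral_eq_sub_of_hasDerivAt
      (fun s _ => hasDerivAt_sawtoothValue a hn k s)
      ((continuous_const.mul (continuous_sawtoothValue a n k)).intervalIntegrable _ _),
    sawtoothValue_zero a (by omega)]

lemma intervalIntegral_eq_sawtoothValue (a : ℕ → ℕ → ℝ) {n N : ℕ} (hn : 1 ≤ n)
    {h : ℝ → ℝ}
    (hh : ∀ k < N, ∀ s ∈ Set.Ioo (0 : ℝ) 1, h (k + s) = a k n * sawtoothValue a n k s)
    {k : ℕ} (hk : k < N) {u : ℝ} (hu : u ∈ Set.Icc (0 : ℝ) 1) :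
    ∫ s in (0 : ℝ)..(k + u), h s = sawtoothValue a (n + 1) k u := by
  have hint : ∀ k ≤ N, IntervalIntegrable h volume 0 k ∧
      ∫ s in (0 : ℝ)..k, h s = compositionSum a (n + 1) k := by
    intro k
    induction k with
    | zero => intro _; simp [compositionSum_zero_right]
    | succ k ih =>
      intro hk
      obtain ⟨h1, h2⟩ := ih (by omega)
      obtain ⟨h3, h4⟩ := intervalIntegral_eq_sawtoothValue_sub a hn k (u := 1) (by simp)
        (hh k (by omega))
      rw [Nat.cast_succ]
      refine ⟨h1.trans h3, ?_⟩
      rw [← intervalIntegral.integral_add_adjacent_intervals h1 h3, h2, h4,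
        compositionSum_succ_right a (by omega)]
      ring
  obtain ⟨h1, h2⟩ := hint k hk.le
  obtain ⟨h3, h4⟩ := intervalIntegral_eq_sawtoothValue_sub a hn k hu (hh k hk)
  rw [← intervalIntegral.integral_add_adjacent_intervals h1 h3, h2, h4]
  ring

lemma floor_natCast_add {k : ℕ} {u : ℝ} (hu : u ∈ Set.Ico (0 : ℝ) 1) : ⌊(k : ℝ) + u⌋ = k := by
  rw [Int.floor_natCast_add, Int.floor_eq_zero_iff.2 hu, add_zero]

lemma natCast_add_mem_Icc {k N : ℕ} (hk : k < N) {u : ℝ} (hu : u ∈ Set.Icc (0 : ℝ) 1) :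
    (k : ℝ) + u ∈ Set.Icc (0 : ℝ) N := by
  have h : (k : ℝ) + 1 ≤ N := by exact_mod_cast hk
  exact ⟨add_nonneg (Nat.cast_nonneg k) hu.1, by linarith [hu.2]⟩

lemma sawtooth_eq_sawtoothValue {d : ℕ} (N : ℕ)
    (x : ℕ → Fin d → ℝ) (X : ℝ → Fin d → ℝ)
    (hX : ∀ t ∈ Set.Icc (0:ℝ) (N:ℝ), ∀ j : Fin d,
      X t j = x ⌊t⌋.toNat j + (t - ⌊t⌋) * (x (⌊t⌋.toNat + 1) j - x ⌊t⌋.toNat j))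
    (Z : ℕ → (ℕ → Fin d) → ℝ → ℝ)
    (hZ1 : ∀ (w : ℕ → Fin d), ∀ t ∈ Set.Icc (0:ℝ) (N:ℝ),
      Z 1 w t = X t (w 0) - X ((⌊t⌋ : ℝ) + 1) (w 0))
    (hZrec : ∀ n, 2 ≤ n → ∀ (w : ℕ → Fin d), ∀ t ∈ Set.Icc (0:ℝ) (N:ℝ),
      Z n w t = ∫ s in (0:ℝ)..t,
        deriv (fun r => X r (w 0)) s * Z (n - 1) (fun i => w (i + 1)) s)
    (v : ℕ → Fin d) {n : ℕ} (hn : 1 ≤ n) :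
    ∀ w : ℕ → Fin d, (∀ s < n, w s = v (n - 1 - s)) → ∀ k < N, ∀ u ∈ Set.Ico (0 : ℝ) 1,
      Z n w (k + u) = sawtoothValue (fun l p => x (l + 1) (v p) - x l (v p)) n k u := by
  have hXk : ∀ k < N, ∀ u ∈ Set.Ico (0 : ℝ) 1, ∀ j,
      X (k + u) j = x k j + u * (x (k + 1) j - x k j) := by
    intro k hk u hu j
    rw [hX _ (natCast_add_mem_Icc hk ⟨hu.1, hu.2.le⟩), floor_natCast_add hu]
    simp
  induction n, hn using Nat.le_induction with
  | base =>
    intro w hw k hk u hu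
    have hk1 : X ((k : ℝ) + 1) (w 0) = x (k + 1) (w 0) := by
      have hfloor : ⌊(k : ℝ) + 1⌋ = ((k + 1 : ℕ) : ℤ) := by
        exact_mod_cast Int.floor_natCast (R := ℝ) (k + 1)
      rw [hX _ (natCast_add_mem_Icc hk (by simp)), hfloor]
      simp
    rw [hZ1 w _ (natCast_add_mem_Icc hk ⟨hu.1, hu.2.le⟩), floor_natCast_add hu, hXk k hk u hu,
      Int.cast_natCast, hk1, sawtoothValue, hw 0 one_pos]
    simp
    ring
  | succ n hn ih =>
    intro w hw k hk u hu
    rw [hZrec (n + 1) (by omega) w _ (natCast_add_mem_Icc hk ⟨hu.1, hu.2.le⟩)]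
    refine intervalIntegral_eq_sawtoothValue _ hn (N := N) (fun k hk s hs => ?_) hk
      ⟨hu.1, hu.2.le⟩
    have hderiv : HasDerivAt (fun r => X r (w 0)) (x (k + 1) (w 0) - x k (w 0)) (k + s) := by
      have hlin : HasDerivAt (fun r : ℝ => x k (w 0) + (r - k) * (x (k + 1) (w 0) - x k (w 0)))
          (x (k + 1) (w 0) - x k (w 0)) (k + s) := by
        simpa using ((((hasDerivAt_id ((k : ℝ) + s)).sub_const (k : ℝ)).mul_const
          (x (k + 1) (w 0) - x k (w 0))).const_add (x k (w 0)))
      refine hlin.congr_of_eventuallyEq ?_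
      filter_upwards [Ioo_mem_nhds (show (k : ℝ) < k + s by linarith [hs.1])
        (show (k : ℝ) + s < k + 1 by linarith [hs.2])] with r hr
      have := hXk k hk (r - k) ⟨by linarith [hr.1], by linarith [hr.2]⟩ (w 0)
      rwa [add_sub_cancel] at this
    rw [hderiv.deriv, Nat.add_sub_cancel, ih (fun i => w (i + 1)) ?_ k hk s ⟨hs.1.le, hs.2⟩,
      hw 0 (by omega)]
    · rfl
    · intro i hi
      rw [hw (i + 1) (by omega)]
      congr 1
      omega

/-- Explicit formula for the backward sawtooth signature coefficients (unit initial datum)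
of the piecewise linear interpolation of a time series `x`, at an arbitrary time
`t ∈ [0,N)`, in terms of the fractional part of `t` and composition sums applied to the
reversed suffix words. -/
theorem sawtooth_signature_explicit {d : ℕ} (N : ℕ) (hN : 1 ≤ N)
    (x : ℕ → Fin d → ℝ) (X : ℝ → Fin d → ℝ)
    (hX : ∀ t ∈ Set.Icc (0:ℝ) (N:ℝ), ∀ j : Fin d,
      X t j = x ⌊t⌋.toNat j + (t - ⌊t⌋) * (x (⌊t⌋.toNat + 1) j - x ⌊t⌋.toNat j))
    (Z : ℕ → (ℕ → Fin d) → ℝ → ℝ)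
    (hZ1 : ∀ (w : ℕ → Fin d), ∀ t ∈ Set.Icc (0:ℝ) (N:ℝ),
      Z 1 w t = X t (w 0) - X ((⌊t⌋ : ℝ) + 1) (w 0))
    (hZrec : ∀ n, 2 ≤ n → ∀ (w : ℕ → Fin d), ∀ t ∈ Set.Icc (0:ℝ) (N:ℝ),
      Z n w t = ∫ s in (0:ℝ)..t,
        deriv (fun r => X r (w 0)) s * Z (n - 1) (fun i => w (i + 1)) s)
    (t : ℝ) (ht : t ∈ Set.Ico (0:ℝ) (N:ℝ)) (n : ℕ) (hn : 2 ≤ n) (w : ℕ → Fin d) :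
    Z n w t =
      ((t - ⌊t⌋) ^ n / (n ! : ℝ) - (t - ⌊t⌋) ^ (n - 1) / ((n - 1)! : ℝ)) *
        (∏ s ∈ Finset.range n, (x (⌊t⌋.toNat + 1) (w s) - x ⌊t⌋.toNat (w s)))
      + ∑ i ∈ Finset.range (n - 1),
          ((t - ⌊t⌋) ^ i / (i ! : ℝ)) *
            (∏ s ∈ Finset.range i, (x (⌊t⌋.toNat + 1) (w s) - x ⌊t⌋.toNat (w s))) *
            ∑ c ∈ Finset.univ.filter (fun c : Composition (n - i) => 2 ≤ c.blocks.headI),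
              (1 / ((c.blocks.map Nat.factorial).prod : ℝ)
                - 1 / ((((c.blocks.headI - 1)! *
                    (c.blocks.tail.map Nat.factorial).prod : ℕ)) : ℝ)) *
                ∑ l ∈ Finset.univ.filter
                    (fun l : Fin c.length → Fin ⌊t⌋.toNat => StrictMono l),
                  ∏ r : Fin c.length, ∏ q : Fin (c.blocksFun r),
                    (x ((l r : ℕ) + 1) (w (n - 1 - (c.sizeUpTo r + q))) -
                      x (l r : ℕ) (w (n - 1 - (c.sizeUpTo r + q)))) := by
  have hk : ⌊t⌋.toNat < N := by
    rw [Int.toNat_lt (Int.floor_nonneg.2 ht.1)]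
    exact Int.floor_lt.2 (by exact_mod_cast ht.2)
  have hcast : ((⌊t⌋.toNat : ℕ) : ℝ) = ⌊t⌋ := by
    exact_mod_cast Int.toNat_of_nonneg (Int.floor_nonneg.2 ht.1)
  have main := sawtooth_eq_sawtoothValue N x X hX Z hZ1 hZrec (fun p => w (n - 1 - p))
    (by omega : 1 ≤ n) w (fun s hs => congrArg w (by omega)) ⌊t⌋.toNat hk (t - ⌊t⌋)
    ⟨Int.fract_nonneg t, Int.fract_lt_one t⟩
  rw [hcast, add_sub_cancel] at main
  have hword : ∀ i ≤ n, ∏ s ∈ Finset.range i, (x (⌊t⌋.toNat + 1) (w (n - 1 - (n - 1 - s)))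
      - x ⌊t⌋.toNat (w (n - 1 - (n - 1 - s)))) =
      ∏ s ∈ Finset.range i, (x (⌊t⌋.toNat + 1) (w s) - x ⌊t⌋.toNat (w s)) := by
    intro i hi
    refine Finset.prod_congr rfl fun s hs => ?_
    rw [Finset.mem_range] at hs
    rw [show n - 1 - (n - 1 - s) = s by omega]
  rw [main, sawtoothValue, hword n le_rfl]
  congr 1
  refine Finset.sum_congr rfl fun i hi => ?_
  rw [Finset.mem_range] at hi
  rw [hword i (by omega), compositionSum, sum_compositionLists]
  congr 1
  refine Finset.sum_congr rfl fun c _ => ?_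
  rw [sawtoothCoeff, blockSum, strictMonoSum]
  congr 1
  refine Finset.sum_congr rfl fun l _ => Finset.prod_congr rfl fun r _ => ?_
  exact Finset.prod_range fun q => x ((l r : ℕ) + 1) (w (n - 1 - (c.sizeUpTo r + q)))
    - x (l r : ℕ) (w (n - 1 - (c.sizeUpTo r + q)))
end

section
/- Let λ > 0 be real and N ≥ 1 an integer. Define real numbers b_l recursively by b_0 = 1 and, for l ≥ 1, b_l := −(1/N)·∫_0^N ( Σ_{j=0}^{l−1} λ^{l−j}·(t^{l−j}/(l−j)!)·b_j − λ^l·Σ_{k=0}^{⌊t⌋−1} (t−k−1)^{l−1}/(l−1)! ) dt. Then for every l ≥ 1, b_l = λ^l·(bernoulli l)/l!. (These are the forward optimal average constants for the path X_t = λt produced by the paper's variance-minimization, and they recover the Bernoulli numbers with B_1 = −1/2.) -/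
open scoped Nat
open MeasureTheory

theorem bernoulliFun_add_one (l : ℕ) (x : ℝ) :
    bernoulliFun l (x + 1) = bernoulliFun l x + l * x ^ (l - 1) := by
  have h := congrArg (fun p : Polynomial ℚ => (p.map (algebraMap ℚ ℝ)).eval x)
    (Polynomial.bernoulli_comp_one_add_X l)
  simpa [bernoulliFun, Polynomial.map_comp, add_comm] using h

theorem bernoulliFun_eq_sum (l : ℕ) (x : ℝ) :
    bernoulliFun l x =
      ∑ j ∈ Finset.range (l + 1), ((bernoulli j : ℚ) : ℝ) * (l.choose j : ℝ) * x ^ (l - j) := by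
  simp [bernoulliFun, Polynomial.bernoulli, Polynomial.map_sum, Polynomial.eval_finsetSum]

theorem sum_range_pow_div_factorial_mul_bernoulli (l : ℕ) (x : ℝ) :
    ∑ j ∈ Finset.range l, x ^ (l - j) / ((l - j)! : ℝ) * (((bernoulli j : ℚ) : ℝ) / (j ! : ℝ)) =
      (bernoulliFun l x - ((bernoulli l : ℚ) : ℝ)) / (l ! : ℝ) := by
  rw [bernoulliFun_eq_sum, Finset.sum_range_succ]
  simp only [Nat.choose_self, Nat.cast_one, mul_one, Nat.sub_self, pow_zero, add_sub_cancel_right]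
  rw [Finset.sum_div]
  refine Finset.sum_congr rfl fun j hj => ?_
  rw [Nat.cast_choose ℝ (Finset.mem_range.1 hj).le]
  field_simp

theorem sum_range_shifted_pow_div_factorial (l : ℕ) (hl : 1 ≤ l) (n : ℕ) (x : ℝ) :
    ∑ k ∈ Finset.range n, (x - (k : ℝ) - 1) ^ (l - 1) / ((l - 1)! : ℝ) =
      (bernoulliFun l x - bernoulliFun l (x - n)) / (l ! : ℝ) := by
  induction n with
  | zero => simp
  | succ n ih =>
    have h := bernoulliFun_add_one l (x - n - 1)
    rw [sub_add_cancel] at h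
    have hfac : (l ! : ℝ) = l * ((l - 1)! : ℝ) := by
      exact_mod_cast (Nat.mul_factorial_pred (by omega : l ≠ 0)).symm
    have hl0 : (l : ℝ) ≠ 0 := by exact_mod_cast (by omega : l ≠ 0)
    rw [Finset.sum_range_succ, ih, h, hfac, Nat.cast_succ, ← sub_sub x]
    field_simp
    ring

/-- The integral over `[0, N]` of a function that repeats a continuous `g` on each unit interval. -/
theorem integral_eq_natCast_mul_of_eq_shift (f g : ℝ → ℝ) (hg : Continuous g)
    (hfg : ∀ (n : ℕ) (t : ℝ), t ∈ Set.Ioo (n : ℝ) (n + 1) → f t = g (t - n)) (N : ℕ) :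
    ∫ t in (0 : ℝ)..N, f t = N * ∫ t in (0 : ℝ)..1, g t := by
  have heq (n : ℕ) :
      Set.EqOn (fun t => g (t - n)) f (Set.uIoo (n : ℝ) ((n + 1 : ℕ) : ℝ)) := by
    rw [Nat.cast_succ, Set.uIoo_of_le (by linarith)]
    exact fun t ht => (hfg n t ht).symm
  have hint (n : ℕ) : IntervalIntegrable f volume (n : ℝ) ((n + 1 : ℕ) : ℝ) :=
    IntervalIntegrable.congr_uIoo
      ((hg.comp (continuous_id.sub continuous_const)).intervalIntegrable _ _) (heq n)
  have hpiece (n : ℕ) : ∫ t in (n : ℝ)..((n + 1 : ℕ) : ℝ), f t = ∫ t in (0 : ℝ)..1, g t := by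
    rw [← intervalIntegral.integral_congr_uIoo (heq n)]
    simp
  have hsum := intervalIntegral.sum_integral_adjacent_intervals
    (a := fun n : ℕ => (n : ℝ)) (n := N) fun k _ => hint k
  simp only [hpiece, Finset.sum_const, Finset.card_range, nsmul_eq_mul, Nat.cast_zero] at hsum
  exact hsum.symm

/-- The forward optimal average constants of the path `X_t = λt` recover the Bernoulli
numbers with `B_1 = -1/2`. -/
theorem forward_optimal_constants_eq_bernoulli (lam : ℝ) (hlam : 0 < lam)
    (N : ℕ) (hN : 1 ≤ N) (b : ℕ → ℝ) (hb0 : b 0 = 1)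
    (hrec : ∀ l, 1 ≤ l → b l =
      -(1 / (N : ℝ)) * ∫ t in (0:ℝ)..(N:ℝ),
        ((∑ j ∈ Finset.range l, lam ^ (l - j) * (t ^ (l - j) / ((l - j)! : ℝ)) * b j)
          - lam ^ l * ∑ k ∈ Finset.range ⌊t⌋.toNat,
              (t - (k : ℝ) - 1) ^ (l - 1) / ((l - 1)! : ℝ))) :
    ∀ l, 1 ≤ l → b l = lam ^ l * ((bernoulli l : ℚ) : ℝ) / (l ! : ℝ) := by
  intro l
  induction l using Nat.strong_induction_on with
  | _ l ih =>
    intro hl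
    have hb (j : ℕ) (hj : j < l) : b j = lam ^ j * ((bernoulli j : ℚ) : ℝ) / (j ! : ℝ) := by
      rcases Nat.eq_zero_or_pos j with rfl | hpos
      · simp [hb0]
      · exact ih j hj hpos
    have hpoly (t : ℝ) :
        ∑ j ∈ Finset.range l, lam ^ (l - j) * (t ^ (l - j) / ((l - j)! : ℝ)) * b j =
          lam ^ l * ((bernoulliFun l t - ((bernoulli l : ℚ) : ℝ)) / (l ! : ℝ)) := by
      rw [← sum_range_pow_div_factorial_mul_bernoulli, Finset.mul_sum]
      refine Finset.sum_congr rfl fun j hj => ?_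
      have hj := Finset.mem_range.1 hj
      rw [hb j hj, ← pow_sub_mul_pow lam hj.le]
      ring
    rw [hrec l hl, integral_eq_natCast_mul_of_eq_shift _
      (fun t => lam ^ l / (l ! : ℝ) * (bernoulliFun l t - ((bernoulli l : ℚ) : ℝ)))]
    · rw [intervalIntegral.integral_const_mul, intervalIntegral.integral_sub
        (intervalIntegrable_bernoulliFun _ _ _) intervalIntegrable_const,
        integral_bernoulliFun_eq_zero (by omega)]
      have hN0 : (N : ℝ) ≠ 0 := by exact_mod_cast (by omega : N ≠ 0)
      simp only [intervalIntegral.integral_const, sub_zero, one_smul]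
      field_simp
      ring
    · exact continuous_const.mul ((continuous_bernoulliFun l).sub continuous_const)
    · intro n t ht
      have hfloor : ⌊t⌋ = n := Int.floor_eq_iff.2 ⟨by exact_mod_cast ht.1.le, by exact_mod_cast ht.2⟩
      rw [hpoly, hfloor, Int.toNat_natCast, sum_range_shifted_pow_div_factorial l hl]
      ring
end
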